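/- Suppose λ > 0, α ∈ [0, 1/2], and Theorem: the number of pairs (i,k) ∈ ℤ × ℕ with j_{|i−α|,k} ≤ λ is strictly less than λ²/4, where j_{ν,k} denotes the k-th positive zero of the Bessel function J_ν. Equivalently, the n-th Dirichlet eigenvalue of the Aharonov–Bohm operator with flux α on the unit disk satisfies λ_n^D(𝔻, α) > 4n for all n ∈ ℕ. -/

import Mathlib

open Real

/-- The Bessel function of the first kind of real order `ν`. -/
noncomputable def besselJ (ν x : ℝ) : ℝ :=
  ∑' n : ℕ, ((-1)^n / (n.factorial * Real.Gamma (ν + n + 1))) *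
    (x / 2) ^ (2 * n) * (x / 2) ^ ν

/-- `besselZero ν k` is the `k`-th positive zero `j_{ν,k}` of `J_ν` (with `besselZero ν 0 = 0`). -/
noncomputable def besselZero (ν : ℝ) : ℕ → ℝ
  | 0 => 0
  | k + 1 => sInf {x : ℝ | besselZero ν k < x ∧ besselJ ν x = 0}

/-- The entire function `∑ (-y)ⁿ / (n! Γ(ν + n + 1))`, so that `J_ν(x) = (x/2)^ν g_ν((x/2)²)`. -/
noncomputable def besselG (ν y : ℝ) : ℝ :=
  ∑' n : ℕ, ((-1) ^ n / (n.factorial * Real.Gamma (ν + n + 1))) * y ^ n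

lemma besselJ_eq (ν x : ℝ) : besselJ ν x = (x / 2) ^ ν * besselG ν ((x / 2) ^ 2) := by
  rw [besselJ, besselG, tsum_mul_right, mul_comm]
  simp only [pow_mul]

lemma gamma_add_natCast_ge {ν : ℝ} (hν : 0 ≤ ν) (n : ℕ) :
    Real.Gamma (ν + 1) ≤ Real.Gamma (ν + n + 1) := by
  induction n with
  | zero => simp
  | succ n ih =>
    have h : Real.Gamma (ν + (n + 1 : ℕ) + 1) = (ν + n + 1) * Real.Gamma (ν + n + 1) := by
      rw [← Real.Gamma_add_one (by positivity)]
      push_cast; ring_nf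
    have h0 : 0 < Real.Gamma (ν + n + 1) := Real.Gamma_pos_of_pos (by positivity)
    rw [h]
    have : (0 : ℝ) ≤ n := n.cast_nonneg
    nlinarith

lemma norm_besselG_coeff_le {ν : ℝ} (hν : 0 ≤ ν) (n : ℕ) :
    ‖((-1) ^ n / (n.factorial * Real.Gamma (ν + n + 1)) : ℝ)‖ ≤
      (Real.Gamma (ν + 1))⁻¹ * (n.factorial : ℝ)⁻¹ := by
  have h0 : 0 < Real.Gamma (ν + 1) := Real.Gamma_pos_of_pos (by positivity)
  have h1 := gamma_add_natCast_ge hν n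
  have h2 : (0 : ℝ) < n.factorial := by positivity
  rw [norm_div, norm_pow, norm_neg, norm_one, one_pow, norm_mul, Real.norm_of_nonneg h2.le,
    Real.norm_of_nonneg (h0.le.trans h1), ← mul_inv, one_div, mul_comm (Real.Gamma (ν + 1))]
  gcongr

lemma summable_besselG {ν : ℝ} (hν : 0 ≤ ν) (y : ℝ) :
    Summable fun n : ℕ => ((-1) ^ n / (n.factorial * Real.Gamma (ν + n + 1)) : ℝ) * y ^ n := by
  refine Summable.of_norm_bounded
    (g := fun n : ℕ => (Real.Gamma (ν + 1))⁻¹ * (|y| ^ n / n.factorial))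
    ((Real.summable_pow_div_factorial _).mul_left _) fun n => ?_
  rw [norm_mul, norm_pow, Real.norm_eq_abs y, div_eq_inv_mul (|y| ^ n), ← mul_assoc]
  gcongr
  exact norm_besselG_coeff_le hν n

lemma hasDerivAt_besselG {ν : ℝ} (hν : 0 ≤ ν) (y : ℝ) :
    HasDerivAt (besselG ν) (-besselG (ν + 1) y) y := by
  set R : ℝ := |y| + 1
  have hR : 0 < R := by positivity
  have hu : Summable fun n : ℕ => (Real.Gamma (ν + 1))⁻¹ * ((2 * R) ^ n / n.factorial) * R⁻¹ :=
    ((Real.summable_pow_div_factorial _).mul_left _).mul_right _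
  have key := hasDerivAt_tsum_of_isPreconnected
    (g := fun (n : ℕ) (z : ℝ) => ((-1) ^ n / (n.factorial * Real.Gamma (ν + n + 1)) : ℝ) * z ^ n)
    (g' := fun (n : ℕ) (z : ℝ) =>
      ((-1) ^ n / (n.factorial * Real.Gamma (ν + n + 1)) : ℝ) * (n * z ^ (n - 1)))
    (t := Metric.ball 0 R) (y₀ := 0) (y := y) hu Metric.isOpen_ball
    (convex_ball 0 R).isPreconnected
    (fun n z _ => (hasDerivAt_pow n z).const_mul _) (fun n z hz => ?_)
    (Metric.mem_ball_self hR) (summable_besselG hν 0) (by simp [R])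
  · refine HasDerivAt.congr_deriv (f := besselG ν) key ?_
    have hs : Summable fun n : ℕ =>
        ((-1) ^ n / (n.factorial * Real.Gamma (ν + n + 1)) : ℝ) * (n * y ^ (n - 1)) := by
      rw [← summable_nat_add_iff 1]
      refine ((summable_besselG (ν := ν + 1) (by positivity) y).neg).congr fun n => ?_
      rw [Nat.factorial_succ, pow_succ]
      push_cast
      rw [show ν + 1 + (n : ℝ) + 1 = ν + (n + 1) + 1 by ring]
      have h1 : (0 : ℝ) < n + 1 := by positivity
      have h2 : 0 < Real.Gamma (ν + (n + 1) + 1) := Real.Gamma_pos_of_pos (by positivity)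
      have h3 : (0 : ℝ) < n.factorial := by positivity
      field_simp
    rw [hs.tsum_eq_zero_add, besselG, ← tsum_neg]
    simp only [CharP.cast_eq_zero, zero_mul, mul_zero, zero_add]
    refine tsum_congr fun n => ?_
    rw [Nat.factorial_succ, pow_succ]
    push_cast
    rw [show ν + 1 + (n : ℝ) + 1 = ν + (n + 1) + 1 by ring]
    have h1 : (0 : ℝ) < n + 1 := by positivity
    have h2 : 0 < Real.Gamma (ν + (n + 1) + 1) := Real.Gamma_pos_of_pos (by positivity)
    have h3 : (0 : ℝ) < n.factorial := by positivity
    field_simp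
  · have hz' : |z| ≤ R := by simpa using (Metric.mem_ball.1 hz).le
    have hn : (n : ℝ) ≤ 2 ^ n := by exact_mod_cast (Nat.lt_two_pow_self (n := n)).le
    have h0 : 0 < Real.Gamma (ν + 1) := Real.Gamma_pos_of_pos (by positivity)
    rcases n with _ | n
    · simp; positivity
    rw [norm_mul, norm_mul, norm_pow, Real.norm_eq_abs z, Real.norm_natCast]
    calc _ ≤ (Real.Gamma (ν + 1))⁻¹ * ((n + 1).factorial : ℝ)⁻¹ * (2 ^ (n + 1) * R ^ n) := by
          gcongr
          · exact norm_besselG_coeff_le hν _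
          rw [Nat.add_sub_cancel]; gcongr
      _ = _ := by rw [mul_pow, pow_succ R]; field_simp

lemma besselG_recurrence {ν : ℝ} (hν : 0 ≤ ν) (y : ℝ) :
    besselG ν y = (ν + 1) * besselG (ν + 1) y - y * besselG (ν + 2) y := by
  have s0 := summable_besselG hν y
  have s1 := summable_besselG (ν := ν + 1) (by positivity) y
  have s2 := summable_besselG (ν := ν + 2) (by positivity) y
  have hz : y * besselG (ν + 2) y = (ν + 1) * besselG (ν + 1) y - besselG ν y := by
    unfold besselG
    rw [← tsum_mul_left, ← tsum_mul_left, ← (s1.mul_left (ν + 1)).tsum_sub s0,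
      ((s1.mul_left (ν + 1)).sub s0).tsum_eq_zero_add]
    have h0 : Real.Gamma (ν + 1 + 1) = (ν + 1) * Real.Gamma (ν + 1) :=
      Real.Gamma_add_one (by positivity)
    have hg : 0 < Real.Gamma (ν + 1) := Real.Gamma_pos_of_pos (by positivity)
    have : (ν + 1) * (((-1) ^ 0 / ((Nat.factorial 0) * Real.Gamma (ν + 1 + (0 : ℕ) + 1))) * y ^ 0)
        - ((-1) ^ 0 / ((Nat.factorial 0) * Real.Gamma (ν + (0 : ℕ) + 1))) * y ^ 0 = 0 := by
      simp only [Nat.cast_zero, add_zero, h0, pow_zero, Nat.factorial_zero, Nat.cast_one, one_mul,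
        mul_one]
      field_simp
      simp
    rw [this, zero_add]
    refine tsum_congr fun n => ?_
    rw [Nat.factorial_succ, pow_succ, pow_succ]
    push_cast
    rw [show ν + 1 + ((n : ℝ) + 1) + 1 = (ν + n + 2) + 1 by ring,
      show ν + 2 + (n : ℝ) + 1 = (ν + n + 2) + 1 by ring,
      show ν + ((n : ℝ) + 1) + 1 = ν + n + 2 by ring,
      Real.Gamma_add_one (s := ν + n + 2) (by positivity)]
    have h1 : (0 : ℝ) < n + 1 := by positivity
    have h4 : (0 : ℝ) < ν + n + 2 := by positivity
    have h2 : 0 < Real.Gamma (ν + n + 2) := Real.Gamma_pos_of_pos (by positivity)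
    have h3 : (0 : ℝ) < n.factorial := by positivity
    field_simp
    ring
  linarith

lemma besselG_zero_pos {ν : ℝ} (hν : 0 ≤ ν) : 0 < besselG ν 0 := by
  have : besselG ν 0 = (Real.Gamma (ν + 1))⁻¹ := by
    rw [besselG, tsum_eq_single 0 (fun n hn => by simp [hn])]
    simp
  rw [this]
  exact inv_pos.2 (Real.Gamma_pos_of_pos (by positivity))

lemma continuous_besselG {ν : ℝ} (hν : 0 ≤ ν) : Continuous (besselG ν) :=
  continuous_iff_continuousAt.2 fun y => (hasDerivAt_besselG hν y).continuousAt

lemma besselJ_recurrence {ν x : ℝ} (hν : 0 ≤ ν) (hx : 0 < x) :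
    besselJ ν x = 2 * (ν + 1) / x * besselJ (ν + 1) x - besselJ (ν + 2) x := by
  have hx2 : 0 < x / 2 := by positivity
  rw [besselJ_eq, besselJ_eq, besselJ_eq, besselG_recurrence hν, Real.rpow_add hx2,
    Real.rpow_add hx2, Real.rpow_one, Real.rpow_two]
  field_simp

lemma hasDerivAt_besselJ {ν x : ℝ} (hν : 0 ≤ ν) (hx : 0 < x) :
    HasDerivAt (besselJ ν) (ν / x * besselJ ν x - besselJ (ν + 1) x) x := by
  have hx2 : 0 < x / 2 := by positivity
  have h1 : HasDerivAt (fun x : ℝ => x / 2) (1 / 2) x := (hasDerivAt_id x).div_const 2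
  have h2 : HasDerivAt (fun x : ℝ => (x / 2) ^ ν * besselG ν ((x / 2) ^ 2)) _ x :=
    (h1.rpow_const (p := ν) (Or.inl hx2.ne')).mul
      ((hasDerivAt_besselG hν ((x / 2) ^ 2)).comp (h := fun x : ℝ => (x / 2) ^ 2) x
        (h1.fun_pow 2))
  rw [funext (besselJ_eq ν)]
  refine h2.congr_deriv ?_
  rw [besselJ_eq, Real.rpow_add hx2, Real.rpow_sub hx2, Real.rpow_one]
  field_simp
  ring

/-- The derivative of `J_ν` (for `x > 0`). -/
noncomputable def besselJDeriv (ν x : ℝ) : ℝ := ν / x * besselJ ν x - besselJ (ν + 1) x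

lemma hasDerivAt_besselJDeriv {ν x : ℝ} (hν : 0 ≤ ν) (hx : 0 < x) :
    HasDerivAt (besselJDeriv ν)
      (-(1 / x) * besselJDeriv ν x - (1 - ν ^ 2 / x ^ 2) * besselJ ν x) x := by
  have h1 := ((hasDerivAt_const x ν).div (hasDerivAt_id x) hx.ne').mul (hasDerivAt_besselJ hν hx)
  have h2 := h1.sub (hasDerivAt_besselJ (ν := ν + 1) (by positivity) hx)
  have h3 := besselJ_recurrence hν hx
  refine HasDerivAt.congr_deriv (f := besselJDeriv ν) h2 ?_
  simp only [id, Pi.div_apply]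
  rw [show ν + 1 + 1 = ν + 2 by ring, besselJDeriv]
  have h4 : besselJ (ν + 2) x = 2 * (ν + 1) / x * besselJ (ν + 1) x - besselJ ν x := by linarith
  rw [h4]
  field_simp
  ring

lemma continuous_besselJ {ν : ℝ} (hν : 0 ≤ ν) : Continuous (besselJ ν) := by
  rw [funext (besselJ_eq ν)]
  have h1 := continuous_besselG hν
  have h2 := Real.continuous_rpow_const hν
  fun_prop

lemma besselJ_eq_zero_iff {ν x : ℝ} (hx : 0 < x) :
    besselJ ν x = 0 ↔ besselG ν ((x / 2) ^ 2) = 0 := by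
  have : (x / 2) ^ ν ≠ 0 := (Real.rpow_pos_of_pos (by positivity) _).ne'
  simp [besselJ_eq, this]

lemma analyticOnNhd_besselG {ν : ℝ} (hν : 0 ≤ ν) : AnalyticOnNhd ℝ (besselG ν) Set.univ := by
  set c : ℕ → ℝ := fun n => (-1) ^ n / (n.factorial * Real.Gamma (ν + n + 1))
  have hr : (FormalMultilinearSeries.ofScalars ℝ c).radius = ⊤ := by
    refine FormalMultilinearSeries.radius_eq_top_of_summable_norm _ fun r => ?_
    refine ((summable_besselG hν r).norm).of_nonneg_of_le (fun n => by positivity) fun n => ?_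
    rw [norm_mul, norm_pow, Real.norm_eq_abs (r : ℝ), NNReal.abs_eq]
    gcongr
    exact (FormalMultilinearSeries.ofScalars_norm ℝ c n).le
  have h := (FormalMultilinearSeries.ofScalars ℝ c).hasFPowerSeriesOnBall (by simp [hr])
  have he : (FormalMultilinearSeries.ofScalars ℝ c).sum = besselG ν := by
    ext y
    simp [FormalMultilinearSeries.sum, besselG, c,
      mul_comm]
  rw [he, hr] at h
  intro y _
  exact h.analyticAt_of_mem (by simp)

lemma besselJ_not_eqOn_zero {ν a b : ℝ} (hν : 0 ≤ ν) (ha : 0 ≤ a) (hab : a < b) :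
    ¬ ∀ x ∈ Set.Ioo a b, besselJ ν x = 0 := by
  intro h
  have hg : ∀ y ∈ Set.Ioo ((a / 2) ^ 2) ((b / 2) ^ 2), besselG ν y = 0 := by
    intro y hy
    have hy0 : 0 < y := (sq_nonneg _).trans_lt hy.1
    have h1 : a / 2 < √y := (Real.lt_sqrt (by positivity)).2 hy.1
    have h2 : √y < b / 2 := (Real.sqrt_lt' (by linarith)).2 hy.2
    have := (besselJ_eq_zero_iff (ν := ν) (x := 2 * √y) (by positivity)).1
      (h _ ⟨by linarith, by linarith⟩)
    rwa [mul_div_cancel_left₀ _ two_ne_zero, Real.sq_sqrt hy0.le] at this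
  have hlt : (a / 2) ^ 2 < (b / 2) ^ 2 := by gcongr
  obtain ⟨y, hy⟩ := Set.nonempty_Ioo.2 hlt
  have := (analyticOnNhd_besselG hν).eqOn_zero_of_preconnected_of_eventuallyEq_zero
    isPreconnected_univ (Set.mem_univ y)
    (by filter_upwards [isOpen_Ioo.mem_nhds hy] with z hz using hg z hz)
  exact (besselG_zero_pos hν).ne' (this (Set.mem_univ 0))

/-- There is no function vanishing at both ends of an interval with a nonnegative derivative
that vanishes only at zeros of `J_ν`. -/
lemma besselJ_no_energy {ν a b : ℝ} {E E' : ℝ → ℝ} (hν : 0 ≤ ν) (ha : 0 ≤ a) (hab : a < b)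
    (hc : ContinuousOn E (Set.Icc a b)) (hd : ∀ x ∈ Set.Ioo a b, HasDerivAt E (E' x) x)
    (hnn : ∀ x ∈ Set.Ioo a b, 0 ≤ E' x) (hz : ∀ x ∈ Set.Ioo a b, E' x = 0 → besselJ ν x = 0)
    (hEa : E a = 0) (hEb : E b = 0) : False := by
  have hmono : MonotoneOn E (Set.Icc a b) := by
    refine monotoneOn_of_hasDerivWithinAt_nonneg (f' := E') (convex_Icc a b) hc ?_ ?_
    · intro x hx
      rw [interior_Icc] at hx ⊢
      exact (hd x hx).hasDerivWithinAt
    · intro x hx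
      rw [interior_Icc] at hx
      exact hnn x hx
  have hE : ∀ x ∈ Set.Icc a b, E x = 0 := fun x hx =>
    le_antisymm (hEb ▸ hmono hx (Set.right_mem_Icc.2 hab.le) hx.2)
      (hEa ▸ hmono (Set.left_mem_Icc.2 hab.le) hx hx.1)
  refine besselJ_not_eqOn_zero hν ha hab fun x hx => hz x hx ?_
  have : HasDerivAt E 0 x := by
    refine (hasDerivAt_const x (0 : ℝ)).congr_of_eventuallyEq ?_
    filter_upwards [isOpen_Ioo.mem_nhds hx] with y hy using hE y (Set.Ioo_subset_Icc_self hy)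
  exact (hd x hx).unique this

lemma lt_of_besselJ_eq_zero {ν z : ℝ} (hν : 0 ≤ ν) (hz : 0 < z) (hJ : besselJ ν z = 0) :
    ν < z := by
  by_contra! hle
  have hν0 : 0 < ν := hz.trans_le hle
  have hJ0 : besselJ ν 0 = 0 := by simp [besselJ_eq, Real.zero_rpow hν0.ne']
  refine besselJ_no_energy (E := fun x => besselJ ν x * (ν * besselJ ν x - x * besselJ (ν + 1) x))
    (E' := fun x => x * besselJDeriv ν x ^ 2 + (ν ^ 2 - x ^ 2) / x * besselJ ν x ^ 2)
    hν le_rfl hz ?_ (fun x hx => ?_) (fun x hx => ?_) (fun x hx h => ?_) ?_ ?_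
  · have h1 := continuous_besselJ hν
    have h2 := continuous_besselJ (ν := ν + 1) (by positivity)
    fun_prop
  · have hx0 : 0 < x := hx.1
    have h1 : HasDerivAt (besselJ ν) (besselJDeriv ν x) x := hasDerivAt_besselJ hν hx0
    have h2 : HasDerivAt (fun x => besselJ ν x * (x * besselJDeriv ν x)) _ x :=
      h1.mul ((hasDerivAt_id x).mul (hasDerivAt_besselJDeriv hν hx0))
    refine (h2.congr_deriv ?_).congr_of_eventuallyEq ?_
    · simp only [id]
      field_simp
      ring
    · filter_upwards [lt_mem_nhds hx0] with y hy
      rw [besselJDeriv]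
      field_simp
  · have h0 : 0 < x := hx.1
    have h1 : 0 ≤ ν ^ 2 - x ^ 2 := by nlinarith [hx.2]
    positivity
  · have h0 : 0 < x := hx.1
    have h1 : 0 < ν ^ 2 - x ^ 2 := by nlinarith [hx.2]
    have h2 : 0 < (ν ^ 2 - x ^ 2) / x := by positivity
    have h3 : 0 ≤ x * besselJDeriv ν x ^ 2 := by positivity
    have h4 : (ν ^ 2 - x ^ 2) / x * besselJ ν x ^ 2 = 0 :=
      le_antisymm (by linarith) (by positivity)
    simpa [h2.ne'] using h4
  · simp [hJ0]
  · simp [hJ]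

/-- For `ν ≥ 1/2`, consecutive zeros of `J_ν` are at least `π` apart. -/
lemma pi_le_sub_of_besselJ_eq_zero {ν a b : ℝ} (hν : 1 / 2 ≤ ν) (ha : 0 ≤ a) (hab : a < b)
    (hJa : a = 0 ∨ besselJ ν a = 0) (hJb : besselJ ν b = 0) : π ≤ b - a := by
  by_contra! hlt
  have hν0 : 0 ≤ ν := by linarith
  have hν1 : 0 ≤ ν + 1 := by linarith
  set d := b - a with hd
  have hd0 : 0 < d := by linarith
  obtain ⟨κ, hκ1, hκd⟩ : ∃ κ, 1 < κ ∧ κ * d < π := by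
    refine ⟨(1 + π / d) / 2, ?_, ?_⟩
    · have : 1 < π / d := (one_lt_div hd0).2 hlt
      linarith
    · field_simp
      linarith
  set m := (a + b) / 2 with hm
  set c : ℝ → ℝ := fun x => Real.cos (κ * (x - m)) with hc
  set s : ℝ → ℝ := fun x => Real.sin (κ * (x - m)) with hs
  have hcpos : ∀ x ∈ Set.Icc a b, 0 < c x := fun x hx => by
    refine Real.cos_pos_of_mem_Ioo ⟨?_, ?_⟩ <;> nlinarith [hx.1, hx.2]
  set G : ℝ → ℝ := fun x => besselG ν ((x / 2) ^ 2) with hG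
  set G₁ : ℝ → ℝ := fun x => besselG (ν + 1) ((x / 2) ^ 2) with hG₁
  set w : ℝ → ℝ := fun x => x ^ (ν + 1 / 2) * G x with hw
  set w' : ℝ → ℝ := fun x =>
    (ν + 1 / 2) * x ^ (ν - 1 / 2) * G x - x ^ (ν + 1 / 2) * (x / 2 * G₁ x) with hw'
  set q : ℝ → ℝ := fun x => κ ^ 2 - 1 + (ν ^ 2 - 1 / 4) / x ^ 2 with hq
  have hin : ∀ x : ℝ, HasDerivAt (fun x : ℝ => (x / 2) ^ 2) (x / 2) x := fun x =>
    (((hasDerivAt_id x).div_const 2).fun_pow 2).congr_deriv (by simp; ring)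
  have hGd : ∀ x, HasDerivAt G (-(x / 2 * G₁ x)) x := fun x =>
    ((hasDerivAt_besselG hν0 ((x / 2) ^ 2)).comp (h := fun x : ℝ => (x / 2) ^ 2) x
      (hin x)).congr_deriv (by simp [hG₁]; ring)
  have hG₁d : ∀ x, HasDerivAt G₁ (-(x / 2 * besselG (ν + 2) ((x / 2) ^ 2))) x := fun x =>
    ((hasDerivAt_besselG hν1 ((x / 2) ^ 2)).comp (h := fun x : ℝ => (x / 2) ^ 2) x
      (hin x)).congr_deriv (by rw [show ν + 1 + 1 = ν + 2 by ring]; ring)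
  have hcd : ∀ x, HasDerivAt c (-(κ * s x)) x := fun x =>
    ((((hasDerivAt_id x).sub_const m).const_mul κ).cos).congr_deriv (by simp [hs]; ring)
  have hsd : ∀ x, HasDerivAt s (κ * c x) x := fun x =>
    ((((hasDerivAt_id x).sub_const m).const_mul κ).sin).congr_deriv (by simp [hc]; ring)
  have hwd : ∀ x, 0 < x → HasDerivAt w (w' x) x := fun x hx =>
    ((Real.hasDerivAt_rpow_const (p := ν + 1 / 2) (Or.inl hx.ne')).mul (hGd x)).congr_deriv (by
      simp only [hw', show ν + 1 / 2 - 1 = ν - 1 / 2 by ring]; ring)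
  have hw'd : ∀ x, 0 < x → HasDerivAt w' ((q x - κ ^ 2) * w x) x := fun x hx => by
    have h1 := ((Real.hasDerivAt_rpow_const (x := x) (p := ν - 1 / 2)
      (Or.inl hx.ne')).const_mul (ν + 1 / 2)).mul (hGd x)
    have h2 := (Real.hasDerivAt_rpow_const (x := x) (p := ν + 1 / 2) (Or.inl hx.ne')).mul
      (((hasDerivAt_id x).div_const 2).mul (hG₁d x))
    refine HasDerivAt.congr_deriv (f := w') (h1.sub h2) ?_
    have e1 : x ^ (ν + 1 / 2) = x ^ (ν - 1 / 2) * x := by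
      rw [← Real.rpow_add_one hx.ne']; ring_nf
    have e2 : x ^ (ν - 1 / 2 - 1) = x ^ (ν - 1 / 2) / x := Real.rpow_sub_one hx.ne' _
    have e3 : x ^ (ν + 1 / 2 - 1) = x ^ (ν - 1 / 2) := by ring_nf
    have e4 := besselG_recurrence hν0 ((x / 2) ^ 2)
    simp only [hq, hw, e1, e2, e3, id, Pi.mul_apply]
    have e5 : (x / 2) ^ 2 * besselG (ν + 2) ((x / 2) ^ 2) = (ν + 1) * G₁ x - G x := by
      simp only [hG, hG₁]; linarith
    have e6 : besselG (ν + 2) ((x / 2) ^ 2) = ((ν + 1) * G₁ x - G x) / (x / 2) ^ 2 := by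
      rw [← e5]; field_simp
    rw [e6]
    field_simp
    ring
  have hwz : w a = 0 ∧ w b = 0 := by
    constructor
    · rcases hJa with rfl | h
      · simp [hw, Real.zero_rpow (show ν + 2⁻¹ ≠ 0 by linarith)]
      · rcases ha.eq_or_lt with rfl | ha'
        · simp [hw, Real.zero_rpow (show ν + 2⁻¹ ≠ 0 by linarith)]
        · simp [hw, hG, (besselJ_eq_zero_iff ha').1 h]
    · simp [hw, hG, (besselJ_eq_zero_iff (by linarith)).1 hJb]
  have hcont : Continuous w ∧ Continuous w' := by
    have h1 := continuous_besselG hν0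
    have h2 := continuous_besselG hν1
    have h3 := Real.continuous_rpow_const (show 0 ≤ ν + 1 / 2 by linarith)
    have h4 := Real.continuous_rpow_const (show 0 ≤ ν - 1 / 2 by linarith)
    constructor <;> fun_prop
  have hccont : Continuous c ∧ Continuous s := by constructor <;> fun_prop
  have hqpos : ∀ x, 0 < x → 0 < q x := fun x hx => by
    have h1 : 0 ≤ (ν ^ 2 - 1 / 4) / x ^ 2 := div_nonneg (by nlinarith) (by positivity)
    simp only [hq]; nlinarith
  refine besselJ_no_energy
    (E := fun x => (w' x * c x + κ * w x * s x) * (w x / c x))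
    (E' := fun x => q x * w x ^ 2 + ((w' x * c x + κ * w x * s x) / c x) ^ 2)
    hν0 ha hab ?_ (fun x hx => ?_) (fun x hx => ?_) (fun x hx h => ?_)
    (by simp [hwz.1]) (by simp [hwz.2])
  · refine ContinuousOn.mul ?_ (ContinuousOn.div hcont.1.continuousOn hccont.1.continuousOn
      fun x hx => (hcpos x hx).ne')
    exact ((hcont.2.mul hccont.1).add
      ((continuous_const.mul hcont.1).mul hccont.2)).continuousOn
  · have hx0 : 0 < x := ha.trans_lt hx.1
    have hcx := hcpos x (Set.Ioo_subset_Icc_self hx)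
    refine ((((hw'd x hx0).mul (hcd x)).add (((hwd x hx0).const_mul κ).mul (hsd x))).mul
      ((hwd x hx0).div (hcd x) hcx.ne')).congr_deriv ?_
    simp only [Pi.mul_apply, Pi.add_apply, Pi.div_apply]
    field_simp
    ring
  · have := hqpos x (ha.trans_lt hx.1)
    positivity
  · have hx0 : 0 < x := ha.trans_lt hx.1
    have hq0 := hqpos x hx0
    have h4 : q x * w x ^ 2 = 0 := le_antisymm
      (by linarith [sq_nonneg ((w' x * c x + κ * w x * s x) / c x)]) (by positivity)
    have h5 : w x = 0 := by simpa [hq0.ne'] using h4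
    have h6 : x ^ (ν + 1 / 2) ≠ 0 := (Real.rpow_pos_of_pos hx0 _).ne'
    rw [besselJ_eq_zero_iff hx0]
    exact (mul_eq_zero.1 h5).resolve_left h6

/-- `Z` is a set of zeros of `J_ν` in `(0, x]`. -/
def IsBesselZeroSet (ν x : ℝ) (Z : Finset ℝ) : Prop :=
  ∀ z ∈ Z, 0 < z ∧ z ≤ x ∧ besselJ ν z = 0

lemma IsBesselZeroSet.card_mul_pi_le {ν : ℝ} (hν : 1 / 2 ≤ ν) {Z : Finset ℝ} :
    ∀ {x : ℝ}, 0 ≤ x → IsBesselZeroSet ν x Z → Z.card * π ≤ x := by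
  induction Z using Finset.induction_on_max with
  | empty => intro x hx _; simpa using hx
  | insert b s hb ih =>
    intro x _ hZ
    obtain ⟨hb0, hbx, hJb⟩ := hZ b (Finset.mem_insert_self _ _)
    have h0 := pi_le_sub_of_besselJ_eq_zero hν le_rfl hb0 (Or.inl rfl) hJb
    have h1 := ih (x := b - π) (by linarith) fun z hz => by
      obtain ⟨hz0, _, hJz⟩ := hZ z (Finset.mem_insert_of_mem hz)
      have := pi_le_sub_of_besselJ_eq_zero hν hz0.le (hb z hz) (Or.inr hJz) hJb
      exact ⟨hz0, by linarith, hJz⟩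
    rw [Finset.card_insert_of_notMem fun h => (hb b h).false]
    push_cast
    linarith

/-- Rolle's theorem for a finite set of zeros to the right of a given zero. -/
lemma exists_finset_deriv_zeros {f f' : ℝ → ℝ} {a : ℝ} (ha : f a = 0)
    (hc : ContinuousOn f (Set.Ici a)) (hd : ∀ x, a < x → HasDerivAt f (f' x) x) (Z : Finset ℝ)
    (hZ : ∀ z ∈ Z, a < z ∧ f z = 0) :
    ∃ Z' : Finset ℝ, Z'.card = Z.card ∧
      ∀ c ∈ Z', a < c ∧ f' c = 0 ∧ ∃ z ∈ Z, c < z := by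
  induction Z using Finset.induction_on_max with
  | empty => exact ⟨∅, by simp⟩
  | insert b s hb ih =>
    obtain ⟨Z', hcard, hZ'⟩ := ih fun z hz => hZ z (Finset.mem_insert_of_mem hz)
    obtain ⟨hab, hfb⟩ := hZ b (Finset.mem_insert_self _ _)
    set m := (insert a s).max' (Finset.insert_nonempty _ _) with hm
    have hmem : m ∈ insert a s := Finset.max'_mem _ _
    have ham : a ≤ m := Finset.le_max' _ _ (Finset.mem_insert_self _ _)
    have hmb : m < b := by
      rcases Finset.mem_insert.1 hmem with h | h
      · rwa [h]
      · exact hb m h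
    have hfm : f m = 0 := by
      rcases Finset.mem_insert.1 hmem with h | h
      · rwa [h]
      · exact (hZ m (Finset.mem_insert_of_mem h)).2
    obtain ⟨c, hcm, hfc⟩ := exists_hasDerivAt_eq_zero hmb
      (hc.mono fun x hx => ham.trans hx.1) (hfm.trans hfb.symm)
      fun x hx => hd x (ham.trans_lt hx.1)
    have hnot : c ∉ Z' := fun h => by
      obtain ⟨_, _, z, hz, hcz⟩ := hZ' c h
      have := Finset.le_max' (insert a s) z (Finset.mem_insert_of_mem hz)
      linarith [hcm.1]
    refine ⟨insert c Z', ?_, fun x hx => ?_⟩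
    · rw [Finset.card_insert_of_notMem hnot, hcard,
        Finset.card_insert_of_notMem fun h => (hb b h).false]
    · rcases Finset.mem_insert.1 hx with rfl | hx
      · exact ⟨ham.trans_lt hcm.1, hfc, b, Finset.mem_insert_self _ _, hcm.2⟩
      · obtain ⟨h1, h2, z, hz, h3⟩ := hZ' x hx
        exact ⟨h1, h2, z, Finset.mem_insert_of_mem hz, h3⟩

lemma IsBesselZeroSet.exists_of_add_one {ν x : ℝ} (hν : 0 ≤ ν) {Z : Finset ℝ}
    (hZ : IsBesselZeroSet (ν + 1) x Z) :
    ∃ Z', IsBesselZeroSet ν x Z' ∧ Z'.card = Z.card := by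
  have hν1 : 0 ≤ ν + 1 := by linarith
  obtain ⟨Z', hcard, hZ'⟩ := exists_finset_deriv_zeros
    (f := fun x => x ^ (ν + 1) * besselJ (ν + 1) x) (f' := fun x => x ^ (ν + 1) * besselJ ν x)
    (a := 0) (by simp [Real.zero_rpow (show ν + 1 ≠ 0 by linarith)])
    ((Real.continuous_rpow_const hν1).mul (continuous_besselJ hν1)).continuousOn
    (fun y hy => by
      refine ((Real.hasDerivAt_rpow_const (p := ν + 1) (Or.inl hy.ne')).mul
        (hasDerivAt_besselJ hν1 hy)).congr_deriv ?_
      have := besselJ_recurrence hν hy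
      rw [this, show ν + 1 + 1 = ν + 2 by ring, Real.rpow_sub_one hy.ne']
      field_simp
      ring) Z (fun z hz => ⟨(hZ z hz).1, by simp [(hZ z hz).2.2]⟩)
  refine ⟨Z', fun c hc => ?_, hcard⟩
  obtain ⟨h1, h2, z, hz, h3⟩ := hZ' c hc
  refine ⟨h1, h3.le.trans (hZ z hz).2.1, ?_⟩
  exact (mul_eq_zero.1 h2).resolve_left (Real.rpow_pos_of_pos h1 _).ne'

lemma IsBesselZeroSet.exists_add_one {ν x : ℝ} (hν : 0 ≤ ν) {Z : Finset ℝ}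
    (hZ : IsBesselZeroSet ν x Z) :
    ∃ Z', IsBesselZeroSet (ν + 1) x Z' ∧ Z.card ≤ Z'.card + 1 := by
  rcases Z.eq_empty_or_nonempty with rfl | hne
  · exact ⟨∅, by simp [IsBesselZeroSet], by simp⟩
  set a := Z.min' hne with ha
  have haZ : a ∈ Z := Z.min'_mem hne
  have ha0 : 0 < a := (hZ a haZ).1
  obtain ⟨Z', hcard, hZ'⟩ := exists_finset_deriv_zeros
    (f := fun x => besselG ν ((x / 2) ^ 2))
    (f' := fun x => -(x / 2 * besselG (ν + 1) ((x / 2) ^ 2)))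
    (a := a) ((besselJ_eq_zero_iff ha0).1 (hZ a haZ).2.2)
    ((continuous_besselG hν).comp (by fun_prop : Continuous fun x : ℝ => (x / 2) ^ 2)).continuousOn
    (fun y _ => by
      have hin : HasDerivAt (fun x : ℝ => (x / 2) ^ 2) (y / 2) y :=
        (((hasDerivAt_id y).div_const 2).fun_pow 2).congr_deriv (by simp; ring)
      exact ((hasDerivAt_besselG hν ((y / 2) ^ 2)).comp (h := fun x : ℝ => (x / 2) ^ 2) y
        hin).congr_deriv (by ring)) (Z.erase a) (fun z hz => by
      have hzZ := Finset.mem_of_mem_erase hz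
      exact ⟨lt_of_le_of_ne (Z.min'_le z hzZ) (Finset.ne_of_mem_erase hz).symm,
        (besselJ_eq_zero_iff (hZ z hzZ).1).1 (hZ z hzZ).2.2⟩)
  refine ⟨Z', fun c hc => ?_, by rw [hcard, Finset.card_erase_of_mem haZ]; omega⟩
  obtain ⟨h1, h2, z, hz, h3⟩ := hZ' c hc
  have hc0 : 0 < c := ha0.trans h1
  refine ⟨hc0, h3.le.trans (hZ z (Finset.mem_of_mem_erase hz)).2.1, ?_⟩
  rw [besselJ_eq_zero_iff hc0]
  simpa [hc0.ne'] using h2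

/-- The leading-order (WKB) phase of `J_ν`. -/
noncomputable def besselPhase (ν x : ℝ) : ℝ := √(x ^ 2 - ν ^ 2) - ν * Real.arccos (ν / x)

lemma hasDerivAt_besselPhase {ν x : ℝ} (hν : 0 ≤ ν) (hx : ν < x) :
    HasDerivAt (besselPhase ν) (√(x ^ 2 - ν ^ 2) / x) x := by
  have hx0 : 0 < x := hν.trans_lt hx
  have hF : 0 < x ^ 2 - ν ^ 2 := by nlinarith
  have hr : 0 < √(x ^ 2 - ν ^ 2) := Real.sqrt_pos.2 hF
  have hr2 : √(x ^ 2 - ν ^ 2) ^ 2 = x ^ 2 - ν ^ 2 := Real.sq_sqrt hF.le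
  have hd : HasDerivAt (fun x : ℝ => ν / x) (-ν / x ^ 2) x :=
    ((hasDerivAt_const x ν).div (hasDerivAt_id x) hx0.ne').congr_deriv (by simp)
  have h1 : ν / x < 1 := (div_lt_one hx0).2 hx
  have h2 : 0 ≤ ν / x := by positivity
  have hac := (Real.hasDerivAt_arccos (by linarith) h1.ne).comp (h := fun x : ℝ => ν / x) x hd
  have hs : √(1 - (ν / x) ^ 2) = √(x ^ 2 - ν ^ 2) / x := by
    rw [show x ^ 2 - ν ^ 2 = x ^ 2 * (1 - (ν / x) ^ 2) by field_simp,
      Real.sqrt_mul (sq_nonneg x), Real.sqrt_sq hx0.le, mul_div_cancel_left₀ _ hx0.ne']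
  refine HasDerivAt.congr_deriv (f := besselPhase ν)
    ((((hasDerivAt_pow 2 x).sub_const (ν ^ 2)).sqrt hF.ne').sub (hac.const_mul ν)) ?_
  rw [hs]
  push_cast
  field_simp
  rw [hr2]

lemma le_besselPhase {ν x : ℝ} (hν : 0 ≤ ν) (hx : ν < x) : x - ν * (π / 2) ≤ besselPhase ν x := by
  have hx0 : 0 < x := hν.trans_lt hx
  set β := Real.arcsin (ν / x) with hβ
  have h1 : ν / x < 1 := (div_lt_one hx0).2 hx
  have h2 : 0 ≤ ν / x := by positivity
  have hβ0 : 0 ≤ β := Real.arcsin_nonneg.2 h2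
  have hβ1 : β ≤ π / 2 := Real.arcsin_le_pi_div_two _
  have hsin : Real.sin β = ν / x := Real.sin_arcsin (by linarith) h1.le
  have hcos : √(x ^ 2 - ν ^ 2) = x * Real.cos β := by
    rw [hβ, Real.cos_arcsin, ← Real.sqrt_sq hx0.le, ← Real.sqrt_mul (sq_nonneg x),
      Real.sqrt_sq hx0.le]
    congr 1
    field_simp
  have h3 := Real.one_sub_sq_div_two_le_cos (x := β)
  have h4 := Real.mul_le_sin hβ0 hβ1
  have h5 : 1 / 2 ≤ 2 / π := by
    rw [div_le_div_iff₀ two_pos Real.pi_pos]; linarith [Real.pi_le_four]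
  have h6 : 1 ≤ Real.cos β + β * Real.sin β := by
    nlinarith [mul_le_mul_of_nonneg_left h4 hβ0, mul_le_mul_of_nonneg_right h5 (sq_nonneg β)]
  have h7 : x * 1 ≤ x * (Real.cos β + β * Real.sin β) := mul_le_mul_of_nonneg_left h6 hx0.le
  have h8 : x * (β * Real.sin β) = ν * β := by rw [hsin]; field_simp
  rw [besselPhase, Real.arccos, hcos, ← hβ]
  nlinarith

lemma besselPhase_mono {ν a b : ℝ} (hν : 0 ≤ ν) (ha : ν < a) (hab : a ≤ b) :
    besselPhase ν a ≤ besselPhase ν b := by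
  have hm : MonotoneOn (besselPhase ν) (Set.Ioi ν) := by
    refine monotoneOn_of_hasDerivWithinAt_nonneg (f' := fun x => √(x ^ 2 - ν ^ 2) / x)
      (convex_Ioi ν) (fun x hx => (hasDerivAt_besselPhase hν hx).continuousAt.continuousWithinAt)
      (fun x hx => ?_) (fun x hx => ?_)
    · rw [interior_Ioi] at hx
      exact (hasDerivAt_besselPhase hν hx).hasDerivWithinAt
    · rw [interior_Ioi] at hx
      have : 0 < x := hν.trans_lt hx
      positivity
  exact hm ha (ha.trans_le hab) hab

/-- The Wronskian of the phase-amplitude form of `J_ν` with a shifted sine of the phase is decreasing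
where `J_ν` and the sine are positive. -/
lemma hasDerivAt_phaseWronskian {ν a x : ℝ} (hν : 0 ≤ ν) (hx : ν < x) :
    HasDerivAt (fun x => (x ^ 2 - ν ^ 2) ^ (-(1 / 4) : ℝ) *
        ((x ^ 2 / (2 * (x ^ 2 - ν ^ 2)) * besselJ ν x + x * besselJDeriv ν x) *
          Real.sin (besselPhase ν x - a) -
          √(x ^ 2 - ν ^ 2) * besselJ ν x * Real.cos (besselPhase ν x - a)))
      (-((x ^ 2 - ν ^ 2) ^ (-(1 / 4) : ℝ) * (x * (x ^ 2 / 4 + ν ^ 2) / (x ^ 2 - ν ^ 2) ^ 2 *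
        besselJ ν x * Real.sin (besselPhase ν x - a)))) x := by
  have hx0 : 0 < x := hν.trans_lt hx
  have hF : 0 < x ^ 2 - ν ^ 2 := by nlinarith
  have hr : 0 < √(x ^ 2 - ν ^ 2) := Real.sqrt_pos.2 hF
  have hr2 : x ^ 2 - ν ^ 2 = √(x ^ 2 - ν ^ 2) ^ 2 := (Real.sq_sqrt hF.le).symm
  have hFd : HasDerivAt (fun x : ℝ => x ^ 2 - ν ^ 2) (2 * x) x :=
    ((hasDerivAt_pow 2 x).sub_const (ν ^ 2)).congr_deriv (by simp)
  have hJ : HasDerivAt (besselJ ν) (besselJDeriv ν x) x := hasDerivAt_besselJ hν hx0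
  have hD := hasDerivAt_besselJDeriv hν hx0
  have hp := (hasDerivAt_besselPhase hν hx).sub_const a
  have h1 := (((hasDerivAt_pow 2 x).fun_div (hFd.const_mul 2) (by positivity)).fun_mul hJ).fun_add
    ((hasDerivAt_id x).fun_mul hD)
  have h2 := (h1.fun_mul hp.sin).fun_sub (((hFd.sqrt hF.ne').fun_mul hJ).fun_mul hp.cos)
  have h3 := (hFd.rpow_const (p := -(1 / 4)) (Or.inl hF.ne')).fun_mul h2
  refine h3.congr_deriv ?_
  rw [Real.rpow_sub_one hF.ne']
  simp only [id]
  generalize (x ^ 2 - ν ^ 2) ^ (-(1 / 4) : ℝ) = p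
  generalize Real.sin (besselPhase ν x - a) = s
  generalize Real.cos (besselPhase ν x - a) = c
  generalize besselJ ν x = J
  generalize besselJDeriv ν x = D
  have hν2 : ν ^ 2 = x ^ 2 - √(x ^ 2 - ν ^ 2) ^ 2 := by linarith
  rw [hr2]
  generalize √(x ^ 2 - ν ^ 2) = r at *
  rw [Real.sqrt_sq hr.le, hν2]
  push_cast
  field_simp
  ring

lemma exists_besselJ_zero_of_phase_gap {ν a b : ℝ} (hν : 0 ≤ ν) (ha : ν < a) (hJa : besselJ ν a = 0)
    (hab : a < b) (hphase : besselPhase ν b = besselPhase ν a + π) :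
    ∃ c ∈ Set.Ioc a b, besselJ ν c = 0 := by
  by_contra! hne
  have ha0 : 0 < a := hν.trans_lt ha
  obtain ⟨σ, hσ⟩ : ∃ σ : ℝ, ∀ x ∈ Set.Ioc a b, 0 < σ * besselJ ν x := by
    have hpre : IsPreconnected (Set.Ioc a b) := isPreconnected_Ioc
    have hcont : ContinuousOn (besselJ ν) (Set.Ioc a b) := (continuous_besselJ hν).continuousOn
    rcases lt_or_gt_of_ne (hne b ⟨hab, le_rfl⟩) with hb | hb
    · refine ⟨-1, fun x hx => ?_⟩
      by_contra! hx'
      obtain ⟨c, hc, hc0⟩ := hpre.intermediate_value ⟨hab, le_rfl⟩ hx hcont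
        (show (0 : ℝ) ∈ Set.Icc _ _ from ⟨hb.le, by linarith⟩)
      exact hne c hc hc0
    · refine ⟨1, fun x hx => ?_⟩
      by_contra! hx'
      obtain ⟨c, hc, hc0⟩ := hpre.intermediate_value hx ⟨hab, le_rfl⟩ hcont
        (show (0 : ℝ) ∈ Set.Icc _ _ from ⟨by linarith, hb.le⟩)
      exact hne c hc hc0
  have hd := fun x (hx : x ∈ Set.Icc a b) =>
    (hasDerivAt_phaseWronskian (a := besselPhase ν a) hν (ha.trans_le hx.1)).const_mul σ
  have hanti := antitoneOn_of_hasDerivWithinAt_nonpos (convex_Icc a b)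
    (fun x hx => (hd x hx).continuousAt.continuousWithinAt)
    (fun x hx => (hd x (interior_subset hx)).hasDerivWithinAt) (fun x hx => by
      rw [interior_Icc] at hx
      have hx0 : 0 < x := ha0.trans hx.1
      have hF : 0 < x ^ 2 - ν ^ 2 := by nlinarith [hx.1]
      have hJ := hσ x (Set.Ioo_subset_Ioc_self hx)
      have hs : 0 ≤ Real.sin (besselPhase ν x - besselPhase ν a) :=
        Real.sin_nonneg_of_nonneg_of_le_pi
          (by linarith [besselPhase_mono hν ha hx.1.le])
          (by linarith [besselPhase_mono hν (ha.trans hx.1) hx.2.le])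
      have : 0 ≤ (x ^ 2 - ν ^ 2) ^ (-(1 / 4) : ℝ) * (x * (x ^ 2 / 4 + ν ^ 2) / (x ^ 2 - ν ^ 2) ^ 2 *
        (σ * besselJ ν x) * Real.sin (besselPhase ν x - besselPhase ν a)) := by positivity
      linarith)
  have hle := hanti (Set.left_mem_Icc.2 hab.le) (Set.right_mem_Icc.2 hab.le) hab.le
  have hb0 : 0 < b := ha0.trans hab
  have hF : 0 < b ^ 2 - ν ^ 2 := by nlinarith
  have hb := hσ b ⟨hab, le_rfl⟩
  simp only [hJa, hphase, add_sub_cancel_left, sub_self, Real.sin_zero, Real.sin_pi,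
    Real.cos_pi, mul_zero, zero_mul] at hle
  have : 0 < (b ^ 2 - ν ^ 2) ^ (-(1 / 4) : ℝ) * √(b ^ 2 - ν ^ 2) * (σ * besselJ ν b) := by
    have := Real.sqrt_pos.2 hF
    positivity
  linarith

/-- After each zero of `J_ν` there is another one within phase distance `π`. -/
lemma exists_next_besselJ_zero {ν z : ℝ} (hν : 0 ≤ ν) (hz : 0 < z) (hJ : besselJ ν z = 0) :
    ∃ c, z < c ∧ besselJ ν c = 0 ∧ besselPhase ν c ≤ besselPhase ν z + π := by
  have hνz := lt_of_besselJ_eq_zero hν hz hJ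
  have h1 := le_besselPhase hν hνz
  set X := besselPhase ν z + π + ν * (π / 2) with hX
  have hzX : z < X := by linarith [Real.pi_pos]
  have h2 := le_besselPhase hν (hνz.trans hzX)
  obtain ⟨b, hb, hpb⟩ := intermediate_value_Icc hzX.le
    (fun x hx => (hasDerivAt_besselPhase hν (hνz.trans_le hx.1)).continuousAt.continuousWithinAt)
    (show besselPhase ν z + π ∈ Set.Icc _ _ from
      ⟨by linarith [Real.pi_pos], by linarith⟩)
  have hzb : z < b := lt_of_le_of_ne hb.1 fun h => by
    rw [← h] at hpb; linarith [Real.pi_pos]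
  obtain ⟨c, hc, hJc⟩ := exists_besselJ_zero_of_phase_gap hν hνz hJ hzb hpb
  exact ⟨c, hc.1, hJc, by linarith [besselPhase_mono hν (hνz.trans hc.1) hc.2]⟩

section

open MeasureTheory Filter Topology

lemma continuous_one_sub_sq_rpow {μ : ℝ} (hμ : 0 ≤ μ) :
    Continuous fun t : ℝ => (1 - t ^ 2) ^ μ :=
  (by fun_prop : Continuous fun t : ℝ => 1 - t ^ 2).rpow_const fun _ => Or.inr hμ

lemma integral_one_sub_sq_rpow_mul_pow_succ {μ : ℝ} (hμ : 0 ≤ μ) (n : ℕ) :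
    (2 * n + 2 * μ + 3) * ∫ t in (0 : ℝ)..1, (1 - t ^ 2) ^ μ * t ^ (2 * (n + 1)) =
      (2 * n + 1) * ∫ t in (0 : ℝ)..1, (1 - t ^ 2) ^ μ * t ^ (2 * n) := by
  have hc := continuous_one_sub_sq_rpow hμ
  have hd : ∀ t ∈ Set.uIcc (0 : ℝ) 1, HasDerivAt (fun t : ℝ => t ^ (2 * n + 1) * (1 - t ^ 2) ^ (μ + 1))
      ((2 * n + 1) * ((1 - t ^ 2) ^ μ * t ^ (2 * n)) -
        (2 * n + 2 * μ + 3) * ((1 - t ^ 2) ^ μ * t ^ (2 * (n + 1)))) t := by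
    intro t ht
    rw [Set.uIcc_of_le zero_le_one] at ht
    have h0 : 0 ≤ 1 - t ^ 2 := by nlinarith [ht.1, ht.2]
    have h1 := ((hasDerivAt_pow 2 t).const_sub 1).rpow_const (p := μ + 1) (Or.inr (by linarith))
    have h2 := (hasDerivAt_pow (2 * n + 1) t).mul h1
    refine h2.congr_deriv ?_
    rw [Real.rpow_add_one' h0 (by positivity)]
    simp only [add_sub_cancel_right, Nat.add_sub_cancel]
    push_cast
    ring
  have h := intervalIntegral.integral_eq_sub_of_hasDerivAt hd
    (by apply Continuous.intervalIntegrable; fun_prop)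
  rw [intervalIntegral.integral_sub (by apply Continuous.intervalIntegrable; fun_prop)
    (by apply Continuous.intervalIntegrable; fun_prop), intervalIntegral.integral_const_mul,
    intervalIntegral.integral_const_mul] at h
  have h3 : (0 : ℝ) ^ (μ + 1) = 0 := Real.zero_rpow (by positivity)
  simp [h3] at h
  linarith

lemma integral_one_sub_sq_rpow_mul_pow {μ : ℝ} (hμ : 0 ≤ μ) (n : ℕ) :
    ∫ t in (0 : ℝ)..1, (1 - t ^ 2) ^ μ * t ^ (2 * n) =
      (∫ t in (0 : ℝ)..1, (1 - t ^ 2) ^ μ) * Real.Gamma (μ + 3 / 2) *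
        ((2 * n).factorial / (4 ^ n * n.factorial * Real.Gamma (μ + 1 / 2 + n + 1))) := by
  induction n with
  | zero =>
    have h : Real.Gamma (μ + 3 / 2) ≠ 0 := (Real.Gamma_pos_of_pos (by linarith)).ne'
    have e : μ + 1 / 2 + 1 = μ + 3 / 2 := by ring
    simp only [mul_zero, pow_zero, mul_one, Nat.factorial_zero, Nat.cast_one, Nat.cast_zero,
      add_zero, one_mul, e]
    field_simp
  | succ n ih =>
    have h := integral_one_sub_sq_rpow_mul_pow_succ hμ n
    have hp : 0 < μ + 1 / 2 + n + 1 := by positivity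
    have hG : Real.Gamma (μ + 1 / 2 + n + 1) ≠ 0 := (Real.Gamma_pos_of_pos hp).ne'
    have e : μ + 1 / 2 + ((n + 1 : ℕ) : ℝ) + 1 = (μ + 1 / 2 + n + 1) + 1 := by push_cast; ring
    have hf : ((2 * (n + 1)).factorial : ℝ) = (2 * n + 2) * ((2 * n + 1) * (2 * n).factorial) := by
      rw [show 2 * (n + 1) = 2 * n + 1 + 1 by ring, Nat.factorial_succ, Nat.factorial_succ]
      push_cast; ring
    rw [ih] at h
    rw [e, Real.Gamma_add_one hp.ne', hf, Nat.factorial_succ]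
    have h4 : (2 * n + 2 * μ + 3 : ℝ) ≠ 0 := by positivity
    have h5 := (eq_div_iff h4).2 ((mul_comm _ _).trans h)
    rw [h5]
    have h6 : (n.factorial : ℝ) ≠ 0 := by positivity
    have h7 := hp.ne'
    have h8 : (2 * n + 2 * μ + 3 : ℝ) = 2 * (μ + 1 / 2 + n + 1) := by ring
    rw [h8]
    push_cast
    set q := μ + 1 / 2 + n + 1
    have h9 : (n + 1 : ℝ) ≠ 0 := by positivity
    field_simp
    ring

/-- Poisson's integral representation. -/
lemma integral_one_sub_sq_rpow_mul_cos {μ : ℝ} (hμ : 0 ≤ μ) (x : ℝ) :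
    ∫ t in (0 : ℝ)..1, (1 - t ^ 2) ^ μ * Real.cos (x * t) =
      (∫ t in (0 : ℝ)..1, (1 - t ^ 2) ^ μ) * Real.Gamma (μ + 3 / 2) *
        besselG (μ + 1 / 2) ((x / 2) ^ 2) := by
  have hc := continuous_one_sub_sq_rpow hμ
  have hs : Summable fun n : ℕ => x ^ (2 * n) / ((2 * n).factorial : ℝ) :=
    (Real.hasSum_cosh x).summable
  set F : ℕ → ℝ → ℝ := fun n t =>
    (1 - t ^ 2) ^ μ * ((-1) ^ n * (x * t) ^ (2 * n) / (2 * n).factorial) with hF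
  have hFc : ∀ n, Continuous (F n) := fun n => by simp only [hF]; fun_prop
  have hb : ∀ n, ∀ t ∈ Set.uIoc (0 : ℝ) 1, ‖F n t‖ ≤ x ^ (2 * n) / ((2 * n).factorial : ℝ) := by
    intro n t ht
    rw [Set.uIoc_of_le zero_le_one] at ht
    have h0 : 0 ≤ 1 - t ^ 2 := by nlinarith [ht.1, ht.2]
    have h1 : (1 - t ^ 2) ^ μ ≤ 1 := Real.rpow_le_one h0 (by nlinarith [ht.1]) hμ
    have h2 : t ^ (2 * n) ≤ 1 := pow_le_one₀ ht.1.le ht.2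
    have h3 : 0 ≤ x ^ (2 * n) := by rw [pow_mul]; positivity
    have h4 : 0 ≤ t ^ (2 * n) := by rw [pow_mul]; positivity
    have h5 := Real.rpow_nonneg h0 μ
    simp only [hF]
    rw [norm_mul, norm_div, norm_mul, norm_pow, norm_neg, norm_one, one_pow, one_mul,
      Real.norm_of_nonneg h5, mul_pow, Real.norm_of_nonneg (mul_nonneg h3 h4),
      Real.norm_of_nonneg (Nat.cast_nonneg _), ← mul_div_assoc]
    gcongr
    calc (1 - t ^ 2) ^ μ * (x ^ (2 * n) * t ^ (2 * n)) ≤ 1 * (x ^ (2 * n) * 1) := by gcongr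
      _ = _ := by ring
  have hlim : ∀ t, HasSum (fun n => F n t) ((1 - t ^ 2) ^ μ * Real.cos (x * t)) := fun t =>
    (Real.hasSum_cos (x * t)).mul_left _
  have h : HasSum (fun n => ∫ t in (0 : ℝ)..1, F n t)
      (∫ t in (0 : ℝ)..1, (1 - t ^ 2) ^ μ * Real.cos (x * t)) := by
    refine intervalIntegral.hasSum_integral_of_dominated_convergence
      (fun n _ => x ^ (2 * n) / ((2 * n).factorial : ℝ))
      (fun n => (hFc n).aestronglyMeasurable) (fun n => ae_of_all _ (hb n))
      (ae_of_all _ fun t _ => hs) ?_ (ae_of_all _ fun t _ => hlim t)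
    exact intervalIntegrable_const
  rw [← h.tsum_eq, besselG, ← tsum_mul_left]
  refine tsum_congr fun n => ?_
  have e : ∀ t : ℝ, (1 - t ^ 2) ^ μ * ((-1) ^ n * (x * t) ^ (2 * n) / (2 * n).factorial) =
      ((-1) ^ n * x ^ (2 * n) / (2 * n).factorial) * ((1 - t ^ 2) ^ μ * t ^ (2 * n)) := by
    intro t; rw [mul_pow]; ring
  simp only [hF, e]
  rw [intervalIntegral.integral_const_mul, integral_one_sub_sq_rpow_mul_pow hμ, div_pow, div_pow,
    ← pow_mul]
  have h6 : (n.factorial : ℝ) ≠ 0 := by positivity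
  have h7 : ((2 * n).factorial : ℝ) ≠ 0 := by positivity
  have h8 : (2 ^ 2 : ℝ) ^ n = 4 ^ n := by norm_num
  rw [h8]
  have hG : Real.Gamma (μ + 1 / 2 + n + 1) ≠ 0 :=
    (Real.Gamma_pos_of_pos (by positivity)).ne'
  field_simp

lemma integral_one_sub_sq_rpow_mul_cos_eq {μ : ℝ} (hμ : 0 < μ) (x : ℝ) :
    ∫ t in (0 : ℝ)..1, (1 - t ^ 2) ^ μ * Real.cos (x * t) =
      (∫ t in (0 : ℝ)..1, (1 - (t + Complex.I) ^ 2) ^ (μ : ℂ) *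
        Complex.exp (Complex.I * x * (t + Complex.I))).re -
      (Complex.I * ∫ y in (0 : ℝ)..1, (1 - (1 + y * Complex.I) ^ 2) ^ (μ : ℂ) *
        Complex.exp (Complex.I * x * (1 + y * Complex.I))).re := by
  set f : ℂ → ℂ := fun z => (1 - z ^ 2) ^ (μ : ℂ) * Complex.exp (Complex.I * x * z) with hf
  have hre : ∀ z : ℂ, (1 - z ^ 2).re = 1 - z.re ^ 2 + z.im ^ 2 := fun z => by
    simp [pow_two]; ring
  have hcont : ∀ z : ℂ, z.re ∈ Set.Icc (0 : ℝ) 1 → ContinuousAt f z := by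
    intro z hz
    have h0 : 0 ≤ (1 - z ^ 2).re := by
      rw [hre]; nlinarith [hz.1, hz.2, sq_nonneg z.im]
    have h1 : ContinuousAt (fun z : ℂ => z ^ (μ : ℂ)) (1 - z ^ 2) :=
      Complex.continuousAt_cpow_const_of_re_pos (Or.inl h0) (by simpa using hμ)
    have h2 : ContinuousAt (fun z : ℂ => 1 - z ^ 2) z := by fun_prop
    exact (ContinuousAt.comp (f := fun z : ℂ => 1 - z ^ 2) h1 h2).mul (by fun_prop)
  have hrect := Complex.integral_boundary_rect_eq_zero_of_continuousOn_of_differentiableOn f 0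
    (1 + Complex.I)
    (fun z hz => by
      have h := (Complex.mem_reProdIm.1 hz).1
      simp only [Complex.zero_re, Complex.add_re, Complex.one_re, Complex.I_re, add_zero,
        Set.uIcc_of_le zero_le_one] at h
      exact (hcont z h).continuousWithinAt)
    (fun z hz => by
      have h := Complex.mem_reProdIm.1 hz
      simp at h
      have h0 : 0 < (1 - z ^ 2).re := by
        rw [hre]; nlinarith
      refine DifferentiableAt.differentiableWithinAt ?_
      exact ((by fun_prop : DifferentiableAt ℂ (fun z : ℂ => 1 - z ^ 2) z).cpow
        (differentiableAt_const _) (Or.inl h0)).mul (by fun_prop))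
  simp only [Complex.zero_re, Complex.add_re, Complex.one_re, Complex.I_re, add_zero,
    Complex.zero_im, Complex.add_im, Complex.one_im, Complex.I_im, zero_add, Complex.ofReal_zero,
    Complex.ofReal_one, zero_mul, one_mul, smul_eq_mul] at hrect
  have hbot : (∫ t in (0 : ℝ)..1, f t).re =
      ∫ t in (0 : ℝ)..1, (1 - t ^ 2) ^ μ * Real.cos (x * t) := by
    have hi : IntervalIntegrable (fun t : ℝ => f t) volume 0 1 := by
      apply ContinuousOn.intervalIntegrable
      intro t ht
      rw [Set.uIcc_of_le zero_le_one] at ht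
      exact (ContinuousAt.comp (f := fun t : ℝ => (t : ℂ)) (hcont t ht)
        (by fun_prop)).continuousWithinAt
    have := Complex.reCLM.intervalIntegral_comp_comm hi
    simp only [Complex.reCLM_apply] at this
    rw [← this]
    refine intervalIntegral.integral_congr fun t ht => ?_
    rw [Set.uIcc_of_le zero_le_one] at ht
    have h0 : 0 ≤ 1 - t ^ 2 := by nlinarith [ht.1, ht.2]
    have e1 : ((1 : ℂ) - (t : ℂ) ^ 2) ^ (μ : ℂ) = (((1 - t ^ 2) ^ μ : ℝ) : ℂ) := by
      rw [Complex.ofReal_cpow h0]; push_cast; rfl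
    have e2 : Complex.I * x * t = ((x * t : ℝ) : ℂ) * Complex.I := by push_cast; ring
    simp only [hf]
    rw [e1, e2, Complex.re_ofReal_mul, Complex.exp_ofReal_mul_I_re]
  have hleft : (Complex.I * ∫ y in (0 : ℝ)..1, f (y * Complex.I)).re = 0 := by
    have e : ∀ y : ℝ, f (y * Complex.I) = (((1 + y ^ 2) ^ μ * Real.exp (-(x * y)) : ℝ) : ℂ) := by
      intro y
      have h0 : 0 ≤ 1 + y ^ 2 := by positivity
      have e1 : (1 : ℂ) - (y * Complex.I) ^ 2 = ((1 + y ^ 2 : ℝ) : ℂ) := by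
        rw [mul_pow, Complex.I_sq]; push_cast; ring
      have e2 : Complex.I * x * (y * Complex.I) = ((-(x * y) : ℝ) : ℂ) := by
        push_cast; linear_combination (x * y : ℂ) * Complex.I_sq
      simp only [hf]
      rw [e1, e2, ← Complex.ofReal_cpow h0, ← Complex.ofReal_exp, ← Complex.ofReal_mul]
    simp only [e]
    rw [intervalIntegral.integral_ofReal]
    simp
  have h := congrArg Complex.re hrect
  rw [Complex.sub_re, Complex.add_re, Complex.sub_re, hleft, hbot, Complex.zero_re] at h
  linarith

lemma norm_integral_rect_top_le {μ : ℝ} (hμ : 0 < μ) (x : ℝ) :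
    ‖∫ t in (0 : ℝ)..1, (1 - (t + Complex.I) ^ 2) ^ (μ : ℂ) *
        Complex.exp (Complex.I * x * (t + Complex.I))‖ ≤ 5 ^ μ * Real.exp (-x) := by
  have h := intervalIntegral.norm_integral_le_of_norm_le_const (a := 0) (b := 1)
    (C := 5 ^ μ * Real.exp (-x)) (f := fun t : ℝ => (1 - (t + Complex.I) ^ 2) ^ (μ : ℂ) *
        Complex.exp (Complex.I * x * (t + Complex.I))) fun t ht => by
    rw [Set.uIoc_of_le zero_le_one] at ht
    have h1 : ‖(1 - (t + Complex.I) ^ 2 : ℂ)‖ ≤ 5 := by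
      have h2 : ‖(t + Complex.I : ℂ)‖ ≤ 2 := by
        refine (norm_add_le _ _).trans ?_
        rw [Complex.norm_real, Complex.norm_I, Real.norm_of_nonneg ht.1.le]
        linarith [ht.2]
      refine (norm_sub_le _ _).trans ?_
      rw [norm_one, norm_pow]
      nlinarith [norm_nonneg (t + Complex.I : ℂ)]
    rw [norm_mul, Complex.norm_cpow_real, Complex.norm_exp]
    have e : (Complex.I * x * (t + Complex.I)).re = -x := by simp
    rw [e]
    gcongr
  simpa using h

lemma ofReal_mul_cpow {r : ℝ} (hr : 0 < r) {z : ℂ} (hz : z ≠ 0) (w : ℂ) :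
    ((r : ℂ) * z) ^ w = (r : ℂ) ^ w * z ^ w := by
  have hr' : (r : ℂ) ≠ 0 := Complex.ofReal_ne_zero.2 hr.ne'
  rw [Complex.cpow_def_of_ne_zero (mul_ne_zero hr' hz), Complex.cpow_def_of_ne_zero hr',
    Complex.cpow_def_of_ne_zero hz, Complex.log_ofReal_mul hr hz, ← Complex.exp_add, add_mul,
    Complex.ofReal_log hr.le]

lemma ofReal_sub_two_mul_I_ne_zero (y : ℝ) : (y - 2 * Complex.I : ℂ) ≠ 0 := fun h => by
  have := congrArg Complex.im h
  simp at this

/-- The right edge of the contour, after rescaling. -/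
lemma integral_rect_right_eq {μ x : ℝ} (hμ : 0 < μ) (hx : 0 < x) :
    (x : ℂ) ^ ((μ + 1 : ℝ) : ℂ) * ∫ y in (0 : ℝ)..1, (1 - (1 + y * Complex.I) ^ 2) ^ (μ : ℂ) *
        Complex.exp (Complex.I * x * (1 + y * Complex.I)) =
      Complex.exp (x * Complex.I) * ∫ s in Set.Ioi (0 : ℝ), (Set.Ioc 0 x).indicator (fun s : ℝ =>
        ((Real.exp (-s) * s ^ μ : ℝ) : ℂ) * ((s / x : ℝ) - 2 * Complex.I) ^ (μ : ℂ)) s := by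
  have hx' : (x : ℂ) ≠ 0 := Complex.ofReal_ne_zero.2 hx.ne'
  set g : ℝ → ℂ := fun y => ((Real.exp (-(x * y)) * y ^ μ : ℝ) : ℂ) * (y - 2 * Complex.I) ^ (μ : ℂ)
    with hg
  have e1 : ∫ y in (0 : ℝ)..1, (1 - (1 + y * Complex.I) ^ 2) ^ (μ : ℂ) *
        Complex.exp (Complex.I * x * (1 + y * Complex.I)) =
      Complex.exp (x * Complex.I) * ∫ y in (0 : ℝ)..1, g y := by
    rw [← intervalIntegral.integral_const_mul]
    refine intervalIntegral.integral_congr fun y hy => ?_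
    rw [Set.uIcc_of_le zero_le_one] at hy
    have h1 : (1 - (1 + y * Complex.I) ^ 2 : ℂ) = (y : ℂ) * (y - 2 * Complex.I) := by
      linear_combination (-(y : ℂ) ^ 2) * Complex.I_sq
    have h2 : Complex.I * x * (1 + y * Complex.I) = x * Complex.I + ((-(x * y) : ℝ) : ℂ) := by
      push_cast; linear_combination (x * y : ℂ) * Complex.I_sq
    simp only [hg]
    rw [h1, h2, Complex.exp_add, ← Complex.ofReal_exp]
    rcases hy.1.eq_or_lt with h0 | h0
    · have : (μ : ℂ) ≠ 0 := Complex.ofReal_ne_zero.2 hμ.ne'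
      simp [← h0, Complex.zero_cpow this, Real.zero_rpow hμ.ne']
    · rw [ofReal_mul_cpow h0 (ofReal_sub_two_mul_I_ne_zero y), ← Complex.ofReal_cpow h0.le]
      push_cast
      ring
  have e2 := intervalIntegral.integral_comp_div (a := 0) (b := x) g hx.ne'
  rw [zero_div, div_self hx.ne'] at e2
  have e3 : ∫ s in Set.Ioi (0 : ℝ), (Set.Ioc 0 x).indicator (fun s : ℝ =>
        ((Real.exp (-s) * s ^ μ : ℝ) : ℂ) * ((s / x : ℝ) - 2 * Complex.I) ^ (μ : ℂ)) s =
      (x : ℂ) ^ (μ : ℂ) * ∫ s in (0 : ℝ)..x, g (s / x) := by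
    rw [integral_indicator measurableSet_Ioc, Measure.restrict_restrict measurableSet_Ioc,
      Set.inter_eq_left.2 Set.Ioc_subset_Ioi_self, intervalIntegral.integral_of_le hx.le,
      ← integral_const_mul]
    refine setIntegral_congr_fun measurableSet_Ioc fun s hs => ?_
    have h1 : x * (s / x) = s := by field_simp
    simp only [hg]
    rw [h1, Real.div_rpow hs.1.le hx.le, ← Complex.ofReal_cpow hx.le]
    have h2 : ((x ^ μ : ℝ) : ℂ) ≠ 0 := Complex.ofReal_ne_zero.2 (Real.rpow_pos_of_pos hx μ).ne'
    push_cast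
    field_simp
  rw [e1, e3, e2, Complex.ofReal_add, Complex.cpow_add _ _ hx', Complex.ofReal_one,
    Complex.cpow_one, Complex.real_smul]
  ring

lemma tendsto_integral_rect_right {μ : ℝ} (hμ : 0 < μ) :
    Tendsto (fun x : ℝ => ∫ s in Set.Ioi (0 : ℝ), (Set.Ioc 0 x).indicator (fun s : ℝ =>
        ((Real.exp (-s) * s ^ μ : ℝ) : ℂ) * ((s / x : ℝ) - 2 * Complex.I) ^ (μ : ℂ)) s) atTop
      (𝓝 (Real.Gamma (μ + 1) * (-(2 * Complex.I)) ^ (μ : ℂ))) := by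
  have hval : (Real.Gamma (μ + 1) * (-(2 * Complex.I)) ^ (μ : ℂ) : ℂ) =
      ∫ s in Set.Ioi (0 : ℝ), ((Real.exp (-s) * s ^ μ : ℝ) : ℂ) * (-(2 * Complex.I)) ^ (μ : ℂ) := by
    rw [integral_mul_const, integral_complex_ofReal, Real.Gamma_eq_integral (by positivity)]
    simp only [add_sub_cancel_right]
  have hint := Real.GammaIntegral_convergent (s := μ + 1) (by positivity)
  simp only [add_sub_cancel_right] at hint
  rw [hval]
  refine tendsto_integral_filter_of_dominated_convergence
    (fun s => Real.exp (-s) * s ^ μ * 3 ^ μ) ?_ ?_ (hint.mul_const _) ?_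
  · refine Eventually.of_forall fun x => Measurable.aestronglyMeasurable ?_
    refine Measurable.indicator ?_ measurableSet_Ioc
    fun_prop
  · filter_upwards [eventually_gt_atTop 0] with x hx
    refine (ae_restrict_iff' measurableSet_Ioi).2 (ae_of_all _ fun s hs => ?_)
    have hs0 : 0 < s := hs
    by_cases hsx : s ∈ Set.Ioc 0 x
    · rw [Set.indicator_of_mem hsx, norm_mul, Complex.norm_cpow_real, Complex.norm_real,
        Real.norm_of_nonneg (by positivity)]
      have h1 : ‖((s / x : ℝ) - 2 * Complex.I : ℂ)‖ ≤ 3 := by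
        refine (norm_sub_le _ _).trans ?_
        rw [Complex.norm_real, norm_mul, Complex.norm_I, Real.norm_of_nonneg (by positivity)]
        have : s / x ≤ 1 := (div_le_one hx).2 hsx.2
        norm_num
        linarith
      gcongr
    · rw [Set.indicator_of_notMem hsx, norm_zero]
      positivity
  · refine (ae_restrict_iff' measurableSet_Ioi).2 (ae_of_all _ fun s hs => ?_)
    have hs0 : 0 < s := hs
    have h1 : Tendsto (fun x : ℝ => ((s / x : ℝ) : ℂ) - 2 * Complex.I) atTop
        (𝓝 (-(2 * Complex.I))) := by
      have h2 : Tendsto (fun x : ℝ => s / x) atTop (𝓝 0) := tendsto_const_nhds.div_atTop tendsto_id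
      have h3 := ((Complex.continuous_ofReal.tendsto 0).comp h2).sub_const (2 * Complex.I)
      simpa using h3
    have h4 : ContinuousAt (fun z : ℂ => z ^ (μ : ℂ)) (-(2 * Complex.I)) :=
      Complex.continuousAt_cpow_const_of_re_pos (Or.inl (by simp)) (by simpa using hμ)
    refine ((h4.tendsto.comp h1).const_mul ((Real.exp (-s) * s ^ μ : ℝ) : ℂ)).congr' ?_
    filter_upwards [eventually_ge_atTop s] with x hx
    rw [Set.indicator_of_mem (show s ∈ Set.Ioc 0 x from ⟨hs0, hx⟩)]
    rfl

lemma neg_two_mul_I_cpow (μ : ℝ) :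
    (-(2 * Complex.I)) ^ (μ : ℂ) =
      (((2 : ℝ) ^ μ : ℝ) : ℂ) * Complex.exp ((-(μ * (π / 2)) : ℝ) * Complex.I) := by
  have h : -(2 * Complex.I) = ((2 : ℝ) : ℂ) * -Complex.I := by push_cast; ring
  rw [h, ofReal_mul_cpow two_pos (neg_ne_zero.2 Complex.I_ne_zero),
    Complex.cpow_def_of_ne_zero (neg_ne_zero.2 Complex.I_ne_zero), Complex.log_neg_I,
    Complex.ofReal_cpow zero_le_two]
  congr 2
  push_cast
  ring

lemma tendsto_rpow_mul_integral_cos {μ : ℝ} (hμ : 0 < μ) :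
    Tendsto (fun x : ℝ => x ^ (μ + 1) * (∫ t in (0 : ℝ)..1, (1 - t ^ 2) ^ μ * Real.cos (x * t)) -
      Real.Gamma (μ + 1) * 2 ^ μ * Real.sin (x - μ * (π / 2))) atTop (𝓝 0) := by
  have hR := tendsto_integral_rect_right hμ
  set L : ℂ := Real.Gamma (μ + 1) * (-(2 * Complex.I)) ^ (μ : ℂ) with hL
  set K : ℝ → ℂ := fun x => ∫ s in Set.Ioi (0 : ℝ), (Set.Ioc 0 x).indicator (fun s : ℝ =>
        ((Real.exp (-s) * s ^ μ : ℝ) : ℂ) * ((s / x : ℝ) - 2 * Complex.I) ^ (μ : ℂ)) s with hK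
  have hexp := (tendsto_rpow_mul_exp_neg_mul_atTop_nhds_zero (μ + 1) 1 one_pos).const_mul
    ((5 : ℝ) ^ μ)
  have hbound := hexp.add (tendsto_iff_norm_sub_tendsto_zero.1 hR)
  rw [mul_zero, add_zero] at hbound
  refine squeeze_zero_norm' ?_ hbound
  filter_upwards [eventually_gt_atTop 0] with x hx
  have h1 := integral_rect_right_eq hμ hx
  have hx1 : (x : ℂ) ^ ((μ + 1 : ℝ) : ℂ) = ((x ^ (μ + 1) : ℝ) : ℂ) := by
    rw [Complex.ofReal_cpow hx.le]
  have h2 : Real.Gamma (μ + 1) * 2 ^ μ * Real.sin (x - μ * (π / 2)) =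
      -(Complex.I * (Complex.exp (x * Complex.I) * L)).re := by
    have e : Complex.I * (Complex.exp (x * Complex.I) * L) =
        ((Real.Gamma (μ + 1) * 2 ^ μ : ℝ) : ℂ) *
          (Complex.I * Complex.exp ((x - μ * (π / 2) : ℝ) * Complex.I)) := by
      rw [hL, neg_two_mul_I_cpow, sub_eq_add_neg, Complex.ofReal_add, add_mul, Complex.exp_add,
        Complex.ofReal_mul]
      ring
    rw [e, Complex.re_ofReal_mul, Complex.I_mul_re, Complex.exp_ofReal_mul_I_im]
    ring
  rw [integral_one_sub_sq_rpow_mul_cos_eq hμ, h2]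
  set T := ∫ t in (0 : ℝ)..1, (1 - (t + Complex.I) ^ 2) ^ (μ : ℂ) *
        Complex.exp (Complex.I * x * (t + Complex.I)) with hT
  set R := ∫ y in (0 : ℝ)..1, (1 - (1 + y * Complex.I) ^ 2) ^ (μ : ℂ) *
        Complex.exp (Complex.I * x * (1 + y * Complex.I)) with hRdef
  have h3 : x ^ (μ + 1) * (T.re - (Complex.I * R).re) -
      -(Complex.I * (Complex.exp (x * Complex.I) * L)).re =
      (((x ^ (μ + 1) : ℝ) : ℂ) * T - Complex.I * (Complex.exp (x * Complex.I) * (K x - L))).re := by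
    rw [mul_sub (Complex.exp (x * Complex.I)), ← h1, hx1, Complex.sub_re, Complex.re_ofReal_mul,
      mul_sub Complex.I, Complex.sub_re, mul_left_comm Complex.I ((x ^ (μ + 1) : ℝ) : ℂ),
      Complex.re_ofReal_mul]
    ring
  rw [h3]
  refine (Complex.abs_re_le_norm _).trans ((norm_sub_le _ _).trans ?_)
  rw [norm_mul, norm_mul, norm_mul, Complex.norm_I, Complex.norm_exp_ofReal_mul_I, one_mul, one_mul,
    Complex.norm_real, Real.norm_of_nonneg (by positivity)]
  have h4 := norm_integral_rect_top_le hμ x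
  have h5 : 0 ≤ x ^ (μ + 1) := by positivity
  have h6 := mul_le_mul_of_nonneg_left h4 h5
  rw [neg_one_mul]
  linarith

lemma exists_besselJ_asymptotics_of_half_lt {ν : ℝ} (hν : 1 / 2 < ν) :
    ∃ C : ℝ, C ≠ 0 ∧
      Tendsto (fun x => √x * besselJ ν x - C * Real.cos (x - ν * (π / 2) - π / 4)) atTop (𝓝 0) := by
  obtain ⟨μ, rfl⟩ : ∃ μ, ν = μ + 1 / 2 := ⟨ν - 1 / 2, by ring⟩
  have hμ : 0 < μ := by linarith
  set c := (∫ t in (0 : ℝ)..1, (1 - t ^ 2) ^ μ) * Real.Gamma (μ + 3 / 2) with hc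
  have hI : 0 < ∫ t in (0 : ℝ)..1, (1 - t ^ 2) ^ μ := by
    refine intervalIntegral.intervalIntegral_pos_of_pos_on
      ((continuous_one_sub_sq_rpow hμ.le).intervalIntegrable _ _) (fun t ht => ?_) one_pos
    exact Real.rpow_pos_of_pos (by nlinarith [ht.1, ht.2]) _
  have hG : 0 < Real.Gamma (μ + 1) := Real.Gamma_pos_of_pos (by positivity)
  have hc0 : 0 < c := mul_pos hI (Real.Gamma_pos_of_pos (by positivity))
  set d : ℝ := 2⁻¹ ^ (μ + 1 / 2) / c with hd
  have hd0 : 0 < d := by positivity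
  refine ⟨d * (Real.Gamma (μ + 1) * 2 ^ μ), by positivity, ?_⟩
  have h := (tendsto_rpow_mul_integral_cos hμ).const_mul d
  rw [mul_zero] at h
  refine h.congr' ?_
  filter_upwards [eventually_gt_atTop 0] with x hx
  have e1 : x - (μ + 1 / 2) * (π / 2) - π / 4 = (x - μ * (π / 2)) - π / 2 := by ring
  rw [e1, Real.cos_sub_pi_div_two, besselJ_eq, integral_one_sub_sq_rpow_mul_cos hμ.le, ← hc,
    div_eq_mul_inv x 2, Real.mul_rpow hx.le (by positivity), Real.sqrt_eq_rpow]
  have e2 : x ^ (μ + 1) = x ^ (1 / 2 : ℝ) * x ^ (μ + 1 / 2) := by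
    rw [← Real.rpow_add hx]; ring_nf
  rw [e2, hd]
  field_simp

/-- The leading term of the large-argument asymptotics of `J_ν`. -/
lemma exists_besselJ_asymptotics {ν : ℝ} (hν : 0 ≤ ν) :
    ∃ C : ℝ, C ≠ 0 ∧
      Tendsto (fun x => √x * besselJ ν x - C * Real.cos (x - ν * (π / 2) - π / 4)) atTop (𝓝 0) := by
  obtain ⟨C, -, h⟩ := exists_besselJ_asymptotics_of_half_lt (ν := ν + 1) (by linarith)
  obtain ⟨D, hD, h'⟩ := exists_besselJ_asymptotics_of_half_lt (ν := ν + 2) (by linarith)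
  refine ⟨D, hD, ?_⟩
  have hz : Tendsto (fun x : ℝ => 2 * (ν + 1) / x) atTop (𝓝 0) :=
    tendsto_const_nhds.div_atTop tendsto_id
  have hz' : Tendsto (fun x : ℝ => 2 * (ν + 1) / x * (C * Real.cos (x - (ν + 1) * (π / 2) - π / 4)))
      atTop (𝓝 0) := by
    refine hz.zero_mul_isBoundedUnder_le ⟨|C|, ?_⟩
    refine eventually_map.2 (Eventually.of_forall fun x => ?_)
    simp only [Function.comp, Real.norm_eq_abs, abs_mul]
    exact mul_le_of_le_one_right (abs_nonneg _) (Real.abs_cos_le_one _)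
  have h1 := ((hz.mul h).add hz').sub h'
  simp only [mul_zero, add_zero, sub_zero] at h1
  refine h1.congr' ?_
  filter_upwards [eventually_gt_atTop 0] with x hx
  have e : x - (ν + 2) * (π / 2) - π / 4 = (x - ν * (π / 2) - π / 4) - π := by ring
  rw [e, Real.cos_sub_pi, besselJ_recurrence hν hx]
  ring

/-- A bound for the number of zeros which is asymptotically strictly less than one too large. -/
def HasBesselZeroBound (ν : ℝ) : Prop :=
  ∃ ε > 0, ∃ X : ℝ, ∀ x, X ≤ x → ∀ Z, IsBesselZeroSet ν x Z →
    (Z.card : ℝ) ≤ x / π - ν / 2 + 5 / 4 - ε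

lemma exists_isBesselZeroSet_card_add {ν z : ℝ} (hν : 0 ≤ ν) (hz : 0 < z) (hJ : besselJ ν z = 0)
    {Z : Finset ℝ} (hZ : IsBesselZeroSet ν z Z) (m : ℕ) :
    ∃ c Z', 0 < c ∧ besselJ ν c = 0 ∧ IsBesselZeroSet ν c Z' ∧ Z'.card = Z.card + m ∧
      besselPhase ν c ≤ besselPhase ν z + m * π := by
  induction m with
  | zero => exact ⟨z, Z, hz, hJ, hZ, by simp, by simp⟩
  | succ m ih =>
    obtain ⟨c, Z', hc, hJc, hZ', hcard, hph⟩ := ih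
    obtain ⟨d, hd, hJd, hphd⟩ := exists_next_besselJ_zero hν hc hJc
    refine ⟨d, insert d Z', hc.trans hd, hJd, fun w hw => ?_, ?_, ?_⟩
    · rcases Finset.mem_insert.1 hw with rfl | hw
      · exact ⟨hc.trans hd, le_rfl, hJd⟩
      · exact ⟨(hZ' w hw).1, (hZ' w hw).2.1.trans hd.le, (hZ' w hw).2.2⟩
    · rw [Finset.card_insert_of_notMem fun h => ((hZ' d h).2.1.not_gt hd), hcard, add_assoc]
    · push_cast
      linarith

lemma sin_pi_mul_le_sin {η w : ℝ} (hη : 0 ≤ η) (h1 : π * η ≤ w) (h2 : w ≤ π - π * η) :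
    Real.sin (π * η) ≤ Real.sin w := by
  have h0 : 0 ≤ π * η := by positivity
  have hpi := Real.pi_pos
  rcases le_total w (π / 2) with h | h
  · exact Real.sin_le_sin_of_le_of_le_pi_div_two (by linarith) h h1
  · rw [← Real.sin_pi_sub w]
    exact Real.sin_le_sin_of_le_of_le_pi_div_two (by linarith) (by linarith) (by linarith)

/-- The phase bounds the counting function of the zeros, provided that a crude bound holds. -/
lemma HasBesselZeroBound.card_le {ν z : ℝ} (hν : 0 ≤ ν) (hb : HasBesselZeroBound ν) (hz : 0 < z)
    (hJ : besselJ ν z = 0) {Z : Finset ℝ} (hZ : IsBesselZeroSet ν z Z) :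
    (Z.card : ℝ) ≤ besselPhase ν z / π + 1 / 4 := by
  by_contra! hlt
  have hpi := Real.pi_pos
  obtain ⟨ε', hε', X, hX⟩ := hb
  obtain ⟨ε, hε⟩ : ∃ ε, ε = Z.card - 1 / 4 - besselPhase ν z / π := ⟨_, rfl⟩
  have hε0 : 0 < ε := by linarith
  choose c Z' hc hJc hZ' hcard hph using exists_isBesselZeroSet_card_add hν hz hJ hZ
  have hupper : ∀ m : ℕ, c m / π - ν / 2 + 1 / 4 ≤ Z.card + m - ε := by
    intro m
    have h1 := (le_besselPhase hν (lt_of_besselJ_eq_zero hν (hc m) (hJc m))).trans (hph m)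
    have h2 := div_le_div_of_nonneg_right h1 hpi.le
    have h3 : (c m - ν * (π / 2)) / π = c m / π - ν / 2 := by field_simp
    have h4 : (besselPhase ν z + m * π) / π = besselPhase ν z / π + m := by field_simp
    linarith
  have hlower : ∀ᶠ m : ℕ in atTop, Z.card + m - 1 + ε' ≤ c m / π - ν / 2 + 1 / 4 := by
    filter_upwards [eventually_gt_atTop ⌈X / π - ν / 2 + 5 / 4⌉₊] with m hm
    have hcm : ((Z' m).card : ℝ) = Z.card + m := by exact_mod_cast hcard m
    have hXc : X ≤ c m := by
      by_contra! hlt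
      have h1 := hX X le_rfl (Z' m) fun w hw => ⟨(hZ' m w hw).1, ((hZ' m w hw).2.1).trans hlt.le,
        (hZ' m w hw).2.2⟩
      have h2 := Nat.lt_of_ceil_lt hm
      have h3 : (0 : ℝ) ≤ Z.card := Nat.cast_nonneg _
      linarith
    have h1 := hX _ hXc _ (hZ' m)
    linarith
  have hctop : Tendsto c atTop atTop := by
    refine tendsto_atTop_mono' atTop (f₁ := fun m : ℕ => (m - 5 / 4 : ℝ) * π) ?_ ?_
    · filter_upwards [hlower] with m hm
      rw [← le_div_iff₀ hpi]
      have h3 : (0 : ℝ) ≤ Z.card := Nat.cast_nonneg _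
      linarith
    · exact (tendsto_atTop_add_const_right _ (-(5 / 4)) tendsto_natCast_atTop_atTop).atTop_mul_const
        hpi
  obtain ⟨C, hC, hasym⟩ := exists_besselJ_asymptotics hν
  have hlim := (hasym.comp hctop).div_const (-C)
  simp only [Function.comp_def, hJc, mul_zero, zero_sub, zero_div] at hlim
  set η := min ε ε' with hη
  have hη0 : 0 < η := lt_min hε0 hε'
  have hsin : ∀ᶠ m : ℕ in atTop, Real.sin (π * η) ≤
      |-(C * Real.cos (c m - ν * (π / 2) - π / 4)) / -C| := by
    filter_upwards [hlower] with m hm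
    have hu := hupper m
    obtain ⟨w, hw⟩ : ∃ w, w = c m / π - ν / 2 + 1 / 4 - (Z.card + m - 1) := ⟨_, rfl⟩
    have e1 : -(C * Real.cos (c m - ν * (π / 2) - π / 4)) / -C =
        Real.cos (c m - ν * (π / 2) - π / 4) := by field_simp
    have e2 : c m - ν * (π / 2) - π / 4 = π * w + ((Z.card + m : ℕ) : ℝ) * π - π / 2 - π := by
      rw [hw]; push_cast; field_simp; ring
    rw [e1, e2, Real.cos_sub_pi, Real.cos_sub_pi_div_two, abs_neg, Real.sin_add_nat_mul_pi, abs_mul,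
      abs_pow, abs_neg, abs_one, one_pow, one_mul]
    refine le_trans ?_ (le_abs_self _)
    have h1 : η ≤ w := by linarith [min_le_right ε ε']
    have h2 : w ≤ 1 - η := by linarith [min_le_left ε ε']
    exact sin_pi_mul_le_sin hη0.le (by gcongr) (by nlinarith)
  have hle := le_of_tendsto_of_tendsto tendsto_const_nhds hlim.abs hsin
  obtain ⟨m, hm⟩ := hlower.exists
  have hu := hupper m
  have hη1 : η < 1 := by linarith [min_le_right ε ε']
  have := Real.sin_pos_of_pos_of_lt_pi (x := π * η) (by positivity) (by nlinarith)
  rw [abs_zero] at hle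
  linarith

lemma HasBesselZeroBound.lt_and_card_le {ν x : ℝ} (hν : 0 ≤ ν) (hb : HasBesselZeroBound ν)
    {Z : Finset ℝ} (hZ : IsBesselZeroSet ν x Z) (hne : Z.Nonempty) :
    ν < x ∧ (Z.card : ℝ) ≤ besselPhase ν x / π + 1 / 4 := by
  obtain ⟨h0, hle, hJ⟩ := hZ _ (Z.max'_mem hne)
  have hlt := lt_of_besselJ_eq_zero hν h0 hJ
  refine ⟨hlt.trans_le hle, (hb.card_le hν h0 hJ fun w hw => ⟨(hZ w hw).1, Z.le_max' w hw,
    (hZ w hw).2.2⟩).trans ?_⟩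
  gcongr
  exact besselPhase_mono hν hlt hle

lemma HasBesselZeroBound.add_one {ν : ℝ} (hν : 0 ≤ ν) (hb : HasBesselZeroBound ν) :
    HasBesselZeroBound (ν + 1) := by
  have hpi := Real.pi_pos
  have hlim : Tendsto (fun x => ν * Real.arccos (ν / x)) atTop (𝓝 (ν * (π / 2))) := by
    have h := (Real.continuous_arccos.tendsto 0).comp
      (tendsto_const_nhds.div_atTop tendsto_id : Tendsto (fun x : ℝ => ν / x) atTop (𝓝 0))
    rw [Real.arccos_zero] at h
    exact h.const_mul ν
  obtain ⟨X, hX⟩ := eventually_atTop.1 (hlim.eventually_const_le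
    (show ν * (π / 2) - π / 4 < ν * (π / 2) by linarith))
  refine ⟨1 / 4, by norm_num, max X (π * (ν + 1)), fun x hx Z hZ => ?_⟩
  have h1 := (le_div_iff₀' hpi).2 ((le_max_right _ _).trans hx)
  obtain ⟨Z', hZ', hcard⟩ := hZ.exists_of_add_one hν
  rw [← hcard]
  rcases Z'.eq_empty_or_nonempty with rfl | hne
  · simp only [Finset.card_empty, Nat.cast_zero]
    linarith
  · obtain ⟨hlt, hle⟩ := hb.lt_and_card_le hν hZ' hne
    have h2 := hX x ((le_max_left _ _).trans hx)
    have h3 : √(x ^ 2 - ν ^ 2) ≤ x :=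
      Real.sqrt_le_iff.2 ⟨hν.trans hlt.le, by nlinarith⟩
    have h4 : besselPhase ν x / π ≤ (x - (ν * (π / 2) - π / 4)) / π := by
      gcongr
      rw [besselPhase]
      linarith
    have h5 : (x - (ν * (π / 2) - π / 4)) / π = x / π - ν / 2 + 1 / 4 := by field_simp; ring
    linarith

lemma hasBesselZeroBound_of_le {ν : ℝ} (hν : 0 ≤ ν) (hν' : ν ≤ 3 / 2) : HasBesselZeroBound ν := by
  have hpi := Real.pi_pos
  rcases lt_or_ge ν (1 / 2) with h | h
  · refine ⟨1 / 4 - ν / 2, by linarith, 0, fun x hx Z hZ => ?_⟩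
    obtain ⟨Z', hZ', hcard⟩ := hZ.exists_add_one hν
    have h1 := (le_div_iff₀ hpi).2 (hZ'.card_mul_pi_le (by linarith) hx)
    have h2 : (Z.card : ℝ) ≤ Z'.card + 1 := by exact_mod_cast hcard
    linarith
  · refine ⟨1 / 2, by norm_num, 0, fun x hx Z hZ => ?_⟩
    have h1 := (le_div_iff₀ hpi).2 (hZ.card_mul_pi_le h hx)
    linarith

lemma hasBesselZeroBound {ν : ℝ} (hν : 0 ≤ ν) : HasBesselZeroBound ν := by
  suffices ∀ n : ℕ, ∀ ν : ℝ, 0 ≤ ν → ν ≤ n + 3 / 2 → HasBesselZeroBound ν by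
    obtain ⟨n, hn⟩ := exists_nat_ge ν
    exact this n ν hν (by linarith)
  intro n
  induction n with
  | zero => exact fun ν hν h => hasBesselZeroBound_of_le hν (by simpa using h)
  | succ n ih =>
    intro ν hν h
    push_cast at h
    rcases le_total ν (3 / 2) with h1 | h1
    · exact hasBesselZeroBound_of_le hν h1
    · have := (ih (ν - 1) (by linarith) (by linarith)).add_one (by linarith)
      rwa [sub_add_cancel] at this

/-- The number of zeros of `J_ν` in `(0, x]` is at most `θ_ν(x) / π + 1 / 4`. -/
lemma IsBesselZeroSet.lt_and_card_le {ν x : ℝ} (hν : 0 ≤ ν) {Z : Finset ℝ}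
    (hZ : IsBesselZeroSet ν x Z) (hne : Z.Nonempty) :
    ν < x ∧ (Z.card : ℝ) ≤ besselPhase ν x / π + 1 / 4 :=
  (hasBesselZeroBound hν).lt_and_card_le hν hZ hne

section PhaseInOrder

variable {x : ℝ}

lemma continuous_besselPhase_left (x : ℝ) : Continuous fun ν => besselPhase ν x := by
  unfold besselPhase
  exact (by fun_prop : Continuous fun ν : ℝ => √(x ^ 2 - ν ^ 2)).sub
    (continuous_id.mul (Real.continuous_arccos.comp (continuous_id.div_const x)))

lemma besselPhase_self (hx : 0 < x) : besselPhase x x = 0 := by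
  simp [besselPhase, div_self hx.ne']

lemma sqrt_one_sub_div_sq (hx : 0 < x) (ν : ℝ) : √(1 - (ν / x) ^ 2) = √(x ^ 2 - ν ^ 2) / x := by
  rw [show 1 - (ν / x) ^ 2 = (x ^ 2 - ν ^ 2) / x ^ 2 by field_simp, Real.sqrt_div' _ (sq_nonneg x),
    Real.sqrt_sq hx.le]

lemma hasDerivAt_sqrt_sq_sub_sq {ν : ℝ} (hν : ν ∈ Set.Ioo 0 x) :
    HasDerivAt (fun ν => √(x ^ 2 - ν ^ 2)) (-ν / √(x ^ 2 - ν ^ 2)) ν := by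
  have hF : x ^ 2 - ν ^ 2 ≠ 0 := by nlinarith [hν.1, hν.2]
  refine (((hasDerivAt_pow 2 ν).const_sub (x ^ 2)).sqrt hF).congr_deriv ?_
  push_cast
  ring

lemma hasDerivAt_arcsin_div {ν : ℝ} (hν : ν ∈ Set.Ioo 0 x) :
    HasDerivAt (fun ν => Real.arcsin (ν / x)) (1 / √(x ^ 2 - ν ^ 2)) ν := by
  have hx : 0 < x := hν.1.trans hν.2
  have h1 : ν / x < 1 := (div_lt_one hx).2 hν.2
  have h0 : 0 < ν / x := div_pos hν.1 hx
  refine ((Real.hasDerivAt_arcsin (by linarith) h1.ne).comp ν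
    ((hasDerivAt_id ν).div_const x)).congr_deriv ?_
  rw [sqrt_one_sub_div_sq hx]
  field_simp

lemma hasDerivAt_arccos_div {ν : ℝ} (hν : ν ∈ Set.Ioo 0 x) :
    HasDerivAt (fun ν => Real.arccos (ν / x)) (-(1 / √(x ^ 2 - ν ^ 2))) ν := by
  simp only [Real.arccos]
  exact (hasDerivAt_arcsin_div hν).const_sub _

lemma hasDerivAt_besselPhase_left {ν : ℝ} (hν : ν ∈ Set.Ioo 0 x) :
    HasDerivAt (fun ν => besselPhase ν x) (-Real.arccos (ν / x)) ν := by
  refine ((hasDerivAt_sqrt_sq_sub_sq hν).sub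
    ((hasDerivAt_id ν).mul (hasDerivAt_arccos_div hν))).congr_deriv ?_
  simp only [id]
  ring

/-- The phase is convex in the order: it lies above its tangents. -/
lemma besselPhase_tangent_le {r z : ℝ} (hx : 0 < x) (hr : r ∈ Set.Icc 0 x) (hz : z ∈ Set.Icc 0 x) :
    besselPhase r x - Real.arccos (r / x) * (z - r) ≤ besselPhase z x := by
  set h : ℝ → ℝ := fun z => besselPhase z x + Real.arccos (r / x) * z with hh
  have hc : Continuous h := (continuous_besselPhase_left x).add (by fun_prop)
  have hd : ∀ z ∈ Set.Ioo 0 x, HasDerivAt h (-Real.arccos (z / x) + Real.arccos (r / x)) z :=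
    fun z hz => ((hasDerivAt_besselPhase_left hz).add
      ((hasDerivAt_id z).const_mul (Real.arccos (r / x)))).congr_deriv (by simp)
  suffices h r ≤ h z by simp only [hh] at this; linarith
  rcases le_total r z with hrz | hrz
  · refine monotoneOn_of_hasDerivWithinAt_nonneg (convex_Icc r z) hc.continuousOn
      (f' := fun z => -Real.arccos (z / x) + Real.arccos (r / x)) (fun w hw => ?_) (fun w hw => ?_)
      (Set.left_mem_Icc.2 hrz) (Set.right_mem_Icc.2 hrz) hrz
    all_goals rw [interior_Icc] at hw
    · exact (hd w ⟨hr.1.trans_lt hw.1, hw.2.trans_le hz.2⟩).hasDerivWithinAt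
    · have := Real.arccos_le_arccos (div_le_div_of_nonneg_right hw.1.le hx.le)
      linarith
  · refine antitoneOn_of_hasDerivWithinAt_nonpos (convex_Icc z r) hc.continuousOn
      (f' := fun z => -Real.arccos (z / x) + Real.arccos (r / x)) (fun w hw => ?_) (fun w hw => ?_)
      (Set.left_mem_Icc.2 hrz) (Set.right_mem_Icc.2 hrz) hrz
    all_goals rw [interior_Icc] at hw
    · exact (hd w ⟨hz.1.trans_lt hw.1, hw.2.trans_le hr.2⟩).hasDerivWithinAt
    · have := Real.arccos_le_arccos (div_le_div_of_nonneg_right hw.2.le hx.le)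
      linarith

lemma besselPhase_nonneg {z : ℝ} (hx : 0 < x) (hz : z ∈ Set.Icc 0 x) : 0 ≤ besselPhase z x := by
  have h := besselPhase_tangent_le hx (Set.right_mem_Icc.2 hx.le) hz
  simpa [besselPhase_self hx, div_self hx.ne'] using h

lemma integral_besselPhase (hx : 0 < x) : ∫ ν in (0 : ℝ)..x, besselPhase ν x = π * x ^ 2 / 8 := by
  have hcont := continuous_besselPhase_left x
  have h := intervalIntegral.integral_eq_sub_of_hasDerivAt_of_le
    (f := fun ν => 3 / 4 * (ν * √(x ^ 2 - ν ^ 2)) + x ^ 2 / 4 * Real.arcsin (ν / x) -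
      1 / 2 * (ν ^ 2 * Real.arccos (ν / x)))
    (f' := fun ν => besselPhase ν x) hx.le
    (by
      have h1 : Continuous fun ν : ℝ => Real.arcsin (ν / x) :=
        Real.continuous_arcsin.comp (continuous_id.div_const x)
      have h2 : Continuous fun ν : ℝ => Real.arccos (ν / x) :=
        Real.continuous_arccos.comp (continuous_id.div_const x)
      exact Continuous.continuousOn (by fun_prop))
    (fun ν hν => by
      have hF : 0 < x ^ 2 - ν ^ 2 := by nlinarith [hν.1, hν.2]
      have hs := Real.sqrt_pos.2 hF
      have hs2 := Real.sq_sqrt hF.le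
      refine (((((hasDerivAt_id ν).mul (hasDerivAt_sqrt_sq_sub_sq hν)).const_mul (3 / 4)).add
        ((hasDerivAt_arcsin_div hν).const_mul (x ^ 2 / 4))).sub
        (((hasDerivAt_pow 2 ν).mul (hasDerivAt_arccos_div hν)).const_mul (1 / 2))).congr_deriv ?_
      simp only [besselPhase, id]
      set q := √(x ^ 2 - ν ^ 2)
      push_cast
      field_simp
      linear_combination (-2) * hs2)
    (hcont.intervalIntegrable _ _)
  rw [h]
  simp [div_self hx.ne']
  ring

end PhaseInOrder

lemma add_half_lt_convex_area {r c a : ℝ} (hr : 0 ≤ r) (hc : 0 < c) (hc' : c ≤ 1 / 2)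
    (hcr : 0 < r → c < 1 / 2) (ha : a = max 0 (r - 1 / (4 * c))) :
    r + 1 / 2 < a + c * (r + 3 / (4 * c) - a) ^ 2 / 2 := by
  have hc4 : c * (1 / (4 * c)) = 1 / 4 := by field_simp
  obtain ⟨d, hd⟩ : ∃ d, d = 1 / (4 * c) := ⟨_, rfl⟩
  have hd3 : 3 / (4 * c) = 3 * d := by rw [hd]; ring
  rw [← hd] at ha hc4
  rw [hd3]
  have hd0 : 0 < d := by rw [hd]; positivity
  have hd1 : 1 / 2 ≤ d := by nlinarith
  rcases le_or_gt d r with h | h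
  · rw [max_eq_right (by linarith)] at ha
    have h1 := hcr (hd0.trans_le h)
    have h2 : 1 / 2 < d := by nlinarith
    rw [ha]
    have : c * (r + 3 * d - (r - d)) ^ 2 / 2 = 8 * d * (c * d) := by ring
    rw [this, hc4]
    linarith
  · rw [max_eq_left (by linarith)] at ha
    rw [ha]
    have h2 : 0 < c * (r - d) ^ 2 := mul_pos hc (by nlinarith)
    nlinarith

/-- A lower bound for the area under a function above a truncated decreasing affine function. -/
lemma add_half_lt_integral {r c b : ℝ} {ψ : ℝ → ℝ} (hr : 0 ≤ r) (hc : 0 < c) (hc' : c ≤ 1 / 2)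
    (hcr : 0 < r → c < 1 / 2) (hb : r + 3 / (4 * c) ≤ b) (hψ : Continuous ψ)
    (hψ0 : ∀ z ∈ Set.Icc 0 b, 0 ≤ ψ z)
    (hψ1 : ∀ z ∈ Set.Icc 0 b, min 1 (3 / 4 - c * (z - r)) ≤ ψ z) :
    r + 1 / 2 < ∫ z in (0 : ℝ)..b, ψ z := by
  obtain ⟨a, ha⟩ : ∃ a, a = max 0 (r - 1 / (4 * c)) := ⟨_, rfl⟩
  have ha0 : 0 ≤ a := ha ▸ le_max_left _ _
  have hpos : 0 < 1 / (4 * c) := by positivity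
  have hpos3 : 0 < 3 / (4 * c) := by positivity
  have har : r - 1 / (4 * c) ≤ a := ha ▸ le_max_right _ _
  have hab : a ≤ r + 3 / (4 * c) := by
    rw [ha]; exact max_le (by linarith) (by linarith)
  have hc4 : c * (1 / (4 * c)) = 1 / 4 := by field_simp
  have hi : ∀ u v, IntervalIntegrable ψ volume u v := fun u v => hψ.intervalIntegrable u v
  rw [← intervalIntegral.integral_add_adjacent_intervals (hi 0 a) (hi a b),
    ← intervalIntegral.integral_add_adjacent_intervals (hi a (r + 3 / (4 * c))) (hi _ b)]
  have h1 : a ≤ ∫ z in (0 : ℝ)..a, ψ z := by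
    rcases ha0.eq_or_lt with h0 | h0
    · rw [← h0, intervalIntegral.integral_same]
    · have har' : a = r - 1 / (4 * c) := by
        rcases max_choice 0 (r - 1 / (4 * c)) with h | h
        · linarith
        · rw [ha, h]
      have h := intervalIntegral.integral_mono_on ha0 (intervalIntegrable_const (c := (1 : ℝ)))
        (hi 0 a) fun z hz => by
          refine le_trans (le_min le_rfl ?_) (hψ1 z ⟨hz.1, by linarith [hz.2]⟩)
          have := mul_le_mul_of_nonneg_left hz.2 hc.le
          rw [har'] at this
          nlinarith
      simpa using h
  have h2 : c * (r + 3 / (4 * c) - a) ^ 2 / 2 ≤ ∫ z in a..(r + 3 / (4 * c)), ψ z := by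
    have h := intervalIntegral.integral_mono_on hab
      ((by fun_prop : Continuous fun z => 3 / 4 - c * (z - r)).intervalIntegrable _ _)
      (hi a _) fun z hz => by
        refine le_trans (le_min ?_ le_rfl) (hψ1 z ⟨ha0.trans hz.1, hz.2.trans hb⟩)
        have := mul_le_mul_of_nonneg_left (har.trans hz.1) hc.le
        nlinarith
    have hint : ∫ z in a..(r + 3 / (4 * c)), (3 / 4 - c * (z - r)) =
        c * (r + 3 / (4 * c) - a) ^ 2 / 2 := by
      rw [intervalIntegral.integral_eq_sub_of_hasDerivAt
        (f := fun z => -(c * (r + 3 / (4 * c) - z) ^ 2 / 2)) (fun z _ => ?_)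
        ((by fun_prop : Continuous fun z => 3 / 4 - c * (z - r)).intervalIntegrable _ _)]
      · ring
      · refine (((((hasDerivAt_id z).const_sub (r + 3 / (4 * c))).pow 2).const_mul c).div_const
          2).neg.congr_deriv ?_
        simp only [id]
        linear_combination (3 : ℝ) * hc4
    rwa [hint] at h
  have h3 : 0 ≤ ∫ z in (r + 3 / (4 * c))..b, ψ z :=
    intervalIntegral.integral_nonneg hb fun z hz => hψ0 z ⟨by linarith [hz.1], hz.2⟩
  have h4 := add_half_lt_convex_area hr hc hc' hcr ha
  linarith

lemma sum_truncation_eq {g : ℝ} (hg : 0 ≤ g) (n : ℕ) :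
    ∑ k ∈ Finset.range n, max 0 (min 1 (g - k)) = min g n := by
  induction n with
  | zero => simp [hg]
  | succ n ih =>
    rw [Finset.sum_range_succ, ih]
    push_cast
    grind

lemma card_le_of_abs_sub_le {α r : ℝ} {s : Finset ℤ} (hr : 0 ≤ r)
    (hs : ∀ i ∈ s, |(i : ℝ) - α| ≤ r) : (s.card : ℝ) ≤ 2 * r + 1 := by
  have hsub : s ⊆ Finset.Icc ⌈α - r⌉ ⌊α + r⌋ := fun i hi => by
    have h := abs_le.1 (hs i hi)
    exact Finset.mem_Icc.2 ⟨Int.ceil_le.2 (by linarith), Int.le_floor.2 (by linarith)⟩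
  have h1 : (s.card : ℝ) ≤ ((⌊α + r⌋ + 1 - ⌈α - r⌉).toNat : ℝ) := by
    rw [← Int.card_Icc]
    exact_mod_cast Finset.card_le_card hsub
  have h2 := Int.floor_le (α + r)
  have h3 := Int.le_ceil (α - r)
  refine h1.trans ?_
  rcases le_total 0 (⌊α + r⌋ + 1 - ⌈α - r⌉) with h | h
  · have h4 : (((⌊α + r⌋ + 1 - ⌈α - r⌉).toNat : ℤ) : ℝ) = ((⌊α + r⌋ + 1 - ⌈α - r⌉ : ℤ) : ℝ) := by
      rw [Int.toNat_of_nonneg h]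
    push_cast at h4
    rw [h4]
    linarith
  · rw [Int.toNat_of_nonpos h]
    push_cast
    linarith

lemma card_lt_integral_truncation {α x : ℝ} (hx : 0 < x) {k : ℕ} {s : Finset ℤ} (hne : s.Nonempty)
    (hs : ∀ i ∈ s, |(i : ℝ) - α| < x ∧ (k : ℝ) + 3 / 4 ≤ besselPhase |(i : ℝ) - α| x / π) :
    (s.card : ℝ) < 2 * ∫ z in (0 : ℝ)..x, max 0 (min 1 (besselPhase z x / π - k)) := by
  have hpi := Real.pi_pos
  obtain ⟨i, hi, hmax⟩ := s.exists_max_image (fun i : ℤ => |(i : ℝ) - α|) hne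
  obtain ⟨hix, hik⟩ := hs i hi
  obtain ⟨r, hr⟩ : ∃ r, r = |(i : ℝ) - α| := ⟨_, rfl⟩
  simp only [← hr] at hmax hix hik
  have hr0 : 0 ≤ r := hr ▸ abs_nonneg _
  have h1 : r / x < 1 := (div_lt_one hx).2 hix
  have h0 : 0 ≤ r / x := by positivity
  have hc : 0 < Real.arccos (r / x) / π := div_pos (Real.arccos_pos.2 h1) hpi
  have hc' : Real.arccos (r / x) / π ≤ 1 / 2 := by
    rw [div_le_iff₀ hpi]
    linarith [Real.arccos_le_pi_div_two.2 h0]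
  have hcr : 0 < r → Real.arccos (r / x) / π < 1 / 2 := fun h => by
    rw [div_lt_iff₀ hpi]
    linarith [Real.arccos_lt_pi_div_two.2 (div_pos h hx)]
  have htan : ∀ z ∈ Set.Icc 0 x,
      (k : ℝ) + 3 / 4 - Real.arccos (r / x) / π * (z - r) ≤ besselPhase z x / π := fun z hz => by
    have h := div_le_div_of_nonneg_right (besselPhase_tangent_le hx ⟨hr0, hix.le⟩ hz) hpi.le
    rw [sub_div, mul_div_right_comm] at h
    linarith
  have hb : r + 3 / (4 * (Real.arccos (r / x) / π)) ≤ x := by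
    have h := htan x (Set.right_mem_Icc.2 hx.le)
    rw [besselPhase_self hx, zero_div] at h
    have h4 : 3 / 4 ≤ Real.arccos (r / x) / π * (x - r) := by
      have : (0 : ℝ) ≤ k := k.cast_nonneg
      linarith
    have h5 := (div_le_iff₀' hc).2 h4
    rw [div_div] at h5
    linarith
  have hψ : Continuous fun z => max 0 (min 1 (besselPhase z x / π - k)) := by
    have := continuous_besselPhase_left x
    fun_prop
  have hint := add_half_lt_integral hr0 hc hc' hcr hb hψ (fun z _ => le_max_left _ _) fun z hz =>
    (min_le_min_left 1 (by linarith [htan z hz])).trans (le_max_right _ _)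
  have hcard := card_le_of_abs_sub_le hr0 hmax
  linarith

/-- The number of shifted lattice points under the graph of the phase function. -/
lemma card_lattice_lt {α x : ℝ} (hx : 0 < x) {S : Finset (ℤ × ℕ)}
    (hS : ∀ p ∈ S, |(p.1 : ℝ) - α| < x ∧
      (p.2 : ℝ) + 3 / 4 ≤ besselPhase |(p.1 : ℝ) - α| x / π) :
    (S.card : ℝ) < x ^ 2 / 4 := by
  rcases S.eq_empty_or_nonempty with rfl | ⟨p, hp⟩
  · simp only [Finset.card_empty, Nat.cast_zero]
    positivity
  have hpi := Real.pi_pos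
  obtain ⟨n, hn⟩ : ∃ n : ℕ, ∀ p ∈ S, p.2 < n :=
    ⟨S.sup Prod.snd + 1, fun p hp => Nat.lt_succ_of_le (Finset.le_sup (f := Prod.snd) hp)⟩
  set φ : ℕ → ℝ → ℝ := fun k z => max 0 (min 1 (besselPhase z x / π - k)) with hφ
  have hcont := continuous_besselPhase_left x
  have hφc : ∀ k, Continuous (φ k) := fun k => by simp only [hφ]; fun_prop
  have hsnd : ∀ k, ((S.filter fun p => p.2 = k).image Prod.fst).card =
      (S.filter fun p => p.2 = k).card := fun k => by
    refine Finset.card_image_of_injOn fun p hp q hq h => ?_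
    simp only [Finset.coe_filter, Set.mem_ofPred_eq] at hp hq
    exact Prod.ext h (hp.2.trans hq.2.symm)
  have hfib : ∀ k, (S.filter fun p => p.2 = k).Nonempty →
      ((S.filter fun p => p.2 = k).card : ℝ) < 2 * ∫ z in (0 : ℝ)..x, φ k z := fun k hne => by
    rw [← hsnd]
    refine card_lt_integral_truncation (α := α) hx (hne.image _) fun i hi => ?_
    obtain ⟨q, hq, rfl⟩ := Finset.mem_image.1 hi
    obtain ⟨hqS, rfl⟩ := Finset.mem_filter.1 hq
    exact hS q hqS
  have hfib' : ∀ k, ((S.filter fun p => p.2 = k).card : ℝ) ≤ 2 * ∫ z in (0 : ℝ)..x, φ k z :=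
      fun k => by
    rcases (S.filter fun p => p.2 = k).eq_empty_or_nonempty with h | h
    · rw [h, Finset.card_empty, Nat.cast_zero]
      have := intervalIntegral.integral_nonneg (μ := volume) hx.le
        fun z _ => (le_max_left 0 (min 1 (besselPhase z x / π - k)))
      positivity
    · exact (hfib k h).le
  have hsum := Finset.card_eq_sum_card_fiberwise (f := Prod.snd) (s := S) (t := Finset.range n)
    fun p hp => Finset.mem_coe.2 (Finset.mem_range.2 (hn p hp))
  have hlt : (S.card : ℝ) < ∑ k ∈ Finset.range n, 2 * ∫ z in (0 : ℝ)..x, φ k z := by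
    rw [hsum]
    push_cast
    exact Finset.sum_lt_sum (fun k _ => hfib' k) ⟨p.2, Finset.mem_range.2 (hn p hp),
      hfib p.2 ⟨p, Finset.mem_filter.2 ⟨hp, rfl⟩⟩⟩
  refine hlt.trans_le ?_
  rw [← Finset.mul_sum, ← intervalIntegral.integral_finsetSum
    fun k _ => (hφc k).intervalIntegrable _ _]
  have hle : ∫ z in (0 : ℝ)..x, ∑ k ∈ Finset.range n, φ k z ≤
      ∫ z in (0 : ℝ)..x, besselPhase z x / π := by
    refine intervalIntegral.integral_mono_on hx.le
      ((continuous_finsetSum _ fun k _ => hφc k).intervalIntegrable _ _)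
      ((hcont.div_const π).intervalIntegrable _ _) fun z hz => ?_
    rw [sum_truncation_eq (div_nonneg (besselPhase_nonneg hx hz) hpi.le)]
    exact min_le_left _ _
  rw [intervalIntegral.integral_div, integral_besselPhase hx] at hle
  have : π * x ^ 2 / 8 / π = x ^ 2 / 8 := by field_simp
  linarith

end

section

open Function

lemma besselZero_eq_iterate (ν : ℝ) (n : ℕ) :
    besselZero ν n = (fun y => sInf {x : ℝ | y < x ∧ besselJ ν x = 0})^[n] 0 := by
  induction n with
  | zero => rfl
  | succ n ih => rw [iterate_succ_apply', ← ih, besselZero]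

lemma besselJ_besselZero_succ {ν : ℝ} (hν : 0 ≤ ν) {k : ℕ}
    (hne : {x : ℝ | besselZero ν k < x ∧ besselJ ν x = 0}.Nonempty) :
    besselZero ν k ≤ besselZero ν (k + 1) ∧ besselJ ν (besselZero ν (k + 1)) = 0 := by
  have hmem : besselZero ν (k + 1) ∈ closure {x : ℝ | besselZero ν k < x ∧ besselJ ν x = 0} :=
    csInf_mem_closure hne ⟨besselZero ν k, fun x hx => hx.1.le⟩
  have hcl : IsClosed {x : ℝ | besselZero ν k ≤ x ∧ besselJ ν x = 0} :=
    isClosed_Ici.inter (isClosed_singleton.preimage (continuous_besselJ hν))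
  have hsub : {x : ℝ | besselZero ν k < x ∧ besselJ ν x = 0} ⊆
      {x : ℝ | besselZero ν k ≤ x ∧ besselJ ν x = 0} := fun x hx => ⟨hx.1.le, hx.2⟩
  exact closure_minimal hsub hcl hmem

/-- Unless infinitely many indices qualify, `besselZero ν` enumerates distinct zeros. -/
lemma exists_isBesselZeroSet_of_besselZero_le {ν lam : ℝ} (hν : 0 ≤ ν) (hlam : 0 < lam) {K : ℕ}
    (hK : besselZero ν K ≤ lam) (hfin : {m : ℕ | 1 ≤ m ∧ besselZero ν m ≤ lam}.Finite) :
    ∃ Z, IsBesselZeroSet ν lam Z ∧ Z.card = K := by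
  have hne : ∀ k, {x : ℝ | besselZero ν k < x ∧ besselJ ν x = 0}.Nonempty := by
    by_contra! h
    obtain ⟨k, hk⟩ := h
    have hper : IsPeriodicPt (fun y => sInf {x : ℝ | y < x ∧ besselJ ν x = 0}) (k + 1) 0 := by
      rw [IsPeriodicPt, IsFixedPt, ← besselZero_eq_iterate, besselZero, hk, Real.sInf_empty]
    have hinj : Injective fun n : ℕ => (k + 1) * (n + 1) := fun m n h => by simpa using h
    refine Set.infinite_of_injective_forall_mem
      (s := {m : ℕ | 1 ≤ m ∧ besselZero ν m ≤ lam}) hinj (fun n => ?_) hfin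
    refine ⟨Nat.mul_pos k.succ_pos n.succ_pos, ?_⟩
    rw [besselZero_eq_iterate, (hper.mul_const (n + 1)).eq]
    exact hlam.le
  have hlt : ∀ k < K, besselZero ν k < besselZero ν (k + 1) := by
    intro k hk
    refine lt_of_le_of_ne (besselJ_besselZero_succ hν (hne k)).1 fun heq => ?_
    have hconst : ∀ n, besselZero ν (k + n) = besselZero ν k := by
      intro n
      induction n with
      | zero => rfl
      | succ n ih => rw [← add_assoc, besselZero, ih, ← besselZero.eq_2, ← heq]
    have hinj : Injective fun n : ℕ => k + n + 1 := fun m n h => by simpa using h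
    refine Set.infinite_of_injective_forall_mem
      (s := {m : ℕ | 1 ≤ m ∧ besselZero ν m ≤ lam}) hinj (fun n => ?_) hfin
    refine ⟨Nat.succ_pos _, ?_⟩
    rw [add_assoc, hconst, ← hconst (K - k), Nat.add_sub_cancel' hk.le]
    exact hK
  have hind : ∀ m ≤ K, 0 ≤ besselZero ν m ∧
      ∃ Z, IsBesselZeroSet ν (besselZero ν m) Z ∧ Z.card = m := by
    intro m
    induction m with
    | zero => exact fun _ => ⟨le_rfl, ∅, by simp [IsBesselZeroSet], rfl⟩
    | succ m ih =>
      intro hm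
      obtain ⟨h0, Z, hZ, hcard⟩ := ih (by omega)
      have hstep := hlt m hm
      refine ⟨h0.trans hstep.le, insert (besselZero ν (m + 1)) Z, fun w hw => ?_, ?_⟩
      · rcases Finset.mem_insert.1 hw with rfl | hw
        · exact ⟨h0.trans_lt hstep, le_rfl, (besselJ_besselZero_succ hν (hne m)).2⟩
        · exact ⟨(hZ w hw).1, (hZ w hw).2.1.trans hstep.le, (hZ w hw).2.2⟩
      · rw [Finset.card_insert_of_notMem fun h => (hZ _ h).2.1.not_gt hstep, hcard]
  obtain ⟨-, Z, hZ, hcard⟩ := hind K le_rfl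
  exact ⟨Z, fun w hw => ⟨(hZ w hw).1, (hZ w hw).2.1.trans hK, (hZ w hw).2.2⟩, hcard⟩

end

/-- Pólya's inequality for the Dirichlet Aharonov–Bohm eigenvalues of the unit disk. -/
theorem polya_dirichlet_AB_disk (α : ℝ) (hα : α ∈ Set.Icc (0:ℝ) (1/2)) (lam : ℝ)
    (hlam : 0 < lam) :
    (({p : ℤ × ℕ | 1 ≤ p.2 ∧ besselZero |(p.1 : ℝ) - α| p.2 ≤ lam}.ncard : ℝ))
      < lam^2 / 4 := by
  set A := {p : ℤ × ℕ | 1 ≤ p.2 ∧ besselZero |(p.1 : ℝ) - α| p.2 ≤ lam} with hA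
  rcases A.finite_or_infinite with hfin | hinf
  · have hinj : Set.InjOn (fun p : ℤ × ℕ => (p.1, p.2 - 1)) (hfin.toFinset : Set (ℤ × ℕ)) := by
      intro p hp q hq h
      have hp1 : 1 ≤ p.2 := (hfin.mem_toFinset.1 hp).1
      have hq1 : 1 ≤ q.2 := (hfin.mem_toFinset.1 hq).1
      simp only [Prod.mk.injEq] at h
      exact Prod.ext h.1 (by omega)
    rw [Set.ncard_eq_toFinset_card A hfin, ← Finset.card_image_of_injOn hinj]
    refine card_lattice_lt (α := α) hlam fun p hp => ?_
    obtain ⟨⟨i, K⟩, hq, rfl⟩ := Finset.mem_image.1 hp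
    have hiK : 1 ≤ K ∧ besselZero |(i : ℝ) - α| K ≤ lam := hfin.mem_toFinset.1 hq
    have hfin' : {m : ℕ | 1 ≤ m ∧ besselZero |(i : ℝ) - α| m ≤ lam}.Finite :=
      (hfin.preimage (f := fun m : ℕ => (i, m)) fun m _ n _ h => (Prod.mk.inj h).2)
    obtain ⟨Z, hZ, hcard⟩ :=
      exists_isBesselZeroSet_of_besselZero_le (abs_nonneg _) hlam hiK.2 hfin'
    have hne : Z.Nonempty := Finset.card_pos.1 (by omega)
    obtain ⟨h1, h2⟩ := hZ.lt_and_card_le (abs_nonneg _) hne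
    refine ⟨h1, ?_⟩
    rw [hcard] at h2
    simp only
    rw [Nat.cast_sub hiK.1, Nat.cast_one]
    linarith
  · rw [hinf.ncard, Nat.cast_zero]
    positivity
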